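/- arXiv:2602.15390 — 4 statements merged into one kernel-verified Lean document; each statement's English description precedes it below -/
import Mathlib

section
/- Let d ≥ 1, let N ≥ 1 be an integer, let c₁ > 0, and let Λ ⊂ ℝ^d be a full-rank lattice with a generating matrix T satisfying |det(T)| = 1/N (so |det(T⁻¹)| = N). If λ₁(Λ) ≥ c₁ · N^{−1/d}, then the shortest nonzero vector of the dual lattice satisfies λ₁(Λ⊥) ≥ (2^d Γ(1+d/2) / (d! · π^{d/2})) · (c₁/d)^{d−1} · N^{1/d}. -/
open scoped RealInnerProductSpace

noncomputable section

/-- `ℝ^d` with the Euclidean norm. -/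
abbrev Euc (d : ℕ) := EuclideanSpace ℝ (Fin d)

/-- `Λ` is the full-rank lattice generated by the columns of the invertible matrix `T`. -/
def IsLatticeOf {d : ℕ} (Λ : Set (Euc d)) (T : Matrix (Fin d) (Fin d) ℝ) : Prop :=
  IsUnit T.det ∧ Λ = { v : Euc d | ∃ k : Fin d → ℤ, ∀ i, v i = ∑ j, T i j * (k j : ℝ) }

/-- Covering radius of `Λ` with respect to all of `ℝ^d`:
`h(Λ) = sup_{x ∈ ℝ^d} inf_{y ∈ Λ} ‖x - y‖₂`. -/
def covRad {d : ℕ} (Λ : Set (Euc d)) : ℝ :=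
  ⨆ x : Euc d, sInf (Set.image (dist x) Λ)

/-- Separation radius of a lattice: half the length of the shortest nonzero vector. -/
def sepRad {d : ℕ} (Λ : Set (Euc d)) : ℝ :=
  (1 / 2) * sInf (Set.image norm (Λ \ {0}))

/-- Mesh ratio `ρ(Λ) = h(Λ)/q(Λ)` of a lattice. -/
def meshRatio {d : ℕ} (Λ : Set (Euc d)) : ℝ := covRad Λ / sepRad Λ

/-- The `j`-th successive minimum of `Λ` with respect to the Euclidean unit ball:
`λ_j(Λ) = inf { r > 0 : dim span(Λ ∩ rB_d) ≥ j }`. -/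
def succMin {d : ℕ} (Λ : Set (Euc d)) (j : ℕ) : ℝ :=
  sInf { r : ℝ | 0 < r ∧
    j ≤ Module.finrank ℝ (Submodule.span ℝ (Λ ∩ Metric.closedBall (0 : Euc d) r)) }

/-- The dual lattice `Λ⊥ = { y : x·y ∈ ℤ for all x ∈ Λ }`. -/
def dualLat {d : ℕ} (Λ : Set (Euc d)) : Set (Euc d) :=
  { y | ∀ x ∈ Λ, ∃ n : ℤ, ⟪x, y⟫ = (n : ℝ) }

/-- The closed unit cube `[0,1]^d`. -/
def unitCube (d : ℕ) : Set (Euc d) := { x | ∀ i, 0 ≤ x i ∧ x i ≤ 1 }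

/-- The half-open unit cube `[0,1)^d`. -/
def halfOpenCube (d : ℕ) : Set (Euc d) := { x | ∀ i, 0 ≤ x i ∧ x i < 1 }

/-- Covering radius of a point set `P` with respect to the unit cube `[0,1]^d`. -/
def covRadCube {d : ℕ} (P : Set (Euc d)) : ℝ :=
  ⨆ x : unitCube d, sInf (Set.image (dist (x : Euc d)) P)

/-- Separation radius of a point set:
`q(P) = (1/2) min_{x ≠ y ∈ P} ‖x - y‖₂`. -/
def sepRadSet {d : ℕ} (P : Set (Euc d)) : ℝ :=
  (1 / 2) * sInf { r : ℝ | ∃ x ∈ P, ∃ y ∈ P, x ≠ y ∧ r = dist x y }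

/-- Mesh ratio `ρ(P) = h(P)/q(P)` of a point set with respect to `[0,1]^d`. -/
def meshRatioSet {d : ℕ} (P : Set (Euc d)) : ℝ := covRadCube P / sepRadSet P

/-- The constant `C_d = 2^d Γ(1+d/2) / π^{d/2}`. -/
def Cd (d : ℕ) : ℝ := 2 ^ d * Real.Gamma (1 + (d : ℝ) / 2) / Real.pi ^ ((d : ℝ) / 2)

/-!
Minkowski's convex body theorem, applied to a box, replaces both transference and Minkowski's second
theorem. Let `y ≠ 0` be a dual vector of a lattice `L` of rank `n` all of whose nonzero vectors
have length at least `m`, and complete `y / ‖y‖` to an orthonormal basis. If `‖y‖` were smaller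
than `(m / √n) ^ (n - 1) / covol L`, then the box with half-width `1 / ‖y‖` along `y` and `m / √n`
in the other directions would contain a nonzero `x ∈ L`. As `⟪x, y⟫` is an integer of absolute
value less than `1`, it vanishes, so all coordinates of `x` are smaller than `m / √n` and
`‖x‖ < m`, a contradiction. The constant `2 ^ d Γ(1 + d / 2) / (d! π ^ (d / 2))` is the ratio of the
volumes of the cross-polytope and the ball it is inscribed in, so it is at most `1`.
-/

open MeasureTheory Module

section InnerProductSpace

variable {E ι : Type*} [NormedAddCommGroup E] [InnerProductSpace ℝ E]

lemma convex_setOf_abs_inner_lt (v : ι → E) (r : ι → ℝ) :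
    Convex ℝ {x : E | ∀ i, |⟪v i, x⟫| < r i} := by
  simp_rw [abs_lt, Set.ofPred_forall]
  exact convex_iInter fun i ↦ (convex_Ioo (-r i) (r i)).linear_preimage (innerₗ E (v i))

lemma inner_eq_zero_of_abs_inner_normalize_lt {x y : E} (hint : ∃ n : ℤ, ⟪x, y⟫ = n)
    (h : |⟪‖y‖⁻¹ • y, x⟫| < ‖y‖⁻¹) : ⟪x, y⟫ = 0 := by
  obtain ⟨n, hn⟩ := hint
  have inv_norm_pos : 0 < ‖y‖⁻¹ := (abs_nonneg _).trans_lt h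
  have abs_lt_one : |(n : ℝ)| < 1 := by
    rwa [real_inner_smul_left, real_inner_comm, hn, abs_mul, abs_of_pos inv_norm_pos,
      mul_lt_iff_lt_one_right inv_norm_pos] at h
  have n_eq_zero : n = 0 := Int.abs_lt_one_iff.mp (mod_cast abs_lt_one)
  rw [hn, n_eq_zero, Int.cast_zero]

lemma exists_ne_zero_forall_inner_mem_int [FiniteDimensional ℝ E] [Nontrivial E]
    (L : Submodule ℤ E) [DiscreteTopology L] [IsZLattice ℝ L] :
    ∃ y : E, y ≠ 0 ∧ ∀ x ∈ L, ∃ n : ℤ, ⟪x, y⟫ = n := by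
  let b := Free.chooseBasis ℤ L
  let v := b.ofZLatticeBasis ℝ L
  obtain ⟨i⟩ := v.index_nonempty
  let y := (InnerProductSpace.toDual ℝ E).symm (v.coord i).toContinuousLinearMap
  have inner_y (x : E) : ⟪x, y⟫ = v.repr x i := by
    rw [real_inner_comm, InnerProductSpace.toDual_symm_apply]
    rfl
  refine ⟨y, fun hy ↦ ?_, fun x hx ↦ ⟨b.repr ⟨x, hx⟩ i, ?_⟩⟩
  · simpa [hy] using inner_y (v i)
  · rw [inner_y]
    exact b.ofZLatticeBasis_repr_apply ℝ L ⟨x, hx⟩ i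

variable [Fintype ι]

lemma exists_orthonormalBasis_apply_eq_normalize [FiniteDimensional ℝ E]
    (hcard : finrank ℝ E = Fintype.card ι) (i₀ : ι) {y : E} (hy : y ≠ 0) :
    ∃ e : OrthonormalBasis ι ℝ E, e i₀ = ‖y‖⁻¹ • y := by
  have unit_orthonormal : Orthonormal ℝ (({i₀} : Set ι).domRestrict fun _ ↦ ‖y‖⁻¹ • y) :=
    ⟨fun _ ↦ by simp [norm_smul, hy], fun i j hij ↦ (hij (Subsingleton.elim i j)).elim⟩
  obtain ⟨e, he⟩ := unit_orthonormal.exists_orthonormalBasis_extension_of_card_eq hcard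
  exact ⟨e, he i₀ rfl⟩

lemma norm_lt_of_abs_inner_lt_div_sqrt_card [Nonempty ι] (e : OrthonormalBasis ι ℝ E) {x : E}
    {m : ℝ} (hx : ∀ i, |⟪e i, x⟫| < m / √(Fintype.card ι)) : ‖x‖ < m := by
  have m_pos : 0 < m := (div_pos_iff_of_pos_right (by positivity)).mp
    ((abs_nonneg _).trans_lt (hx (Classical.arbitrary ι)))
  refine lt_of_pow_lt_pow_left₀ 2 m_pos.le ?_
  calc ‖x‖ ^ 2 = ∑ i, ⟪e i, x⟫ ^ 2 := (e.sum_sq_inner_right x).symm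
    _ < ∑ _i : ι, (m / √(Fintype.card ι)) ^ 2 :=
        Finset.sum_lt_sum_of_nonempty Finset.univ_nonempty fun i _ ↦
          sq_lt_sq' (abs_lt.mp (hx i)).1 (abs_lt.mp (hx i)).2
    _ = m ^ 2 := by
        rw [Finset.sum_const, Finset.card_univ, nsmul_eq_mul, div_pow,
          Real.sq_sqrt (Nat.cast_nonneg _), mul_div_cancel₀]
        exact Nat.cast_ne_zero.mpr Fintype.card_ne_zero

variable [FiniteDimensional ℝ E] [MeasurableSpace E] [BorelSpace E]

lemma volume_setOf_abs_inner_lt (e : OrthonormalBasis ι ℝ E) (r : ι → ℝ) :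
    volume {x : E | ∀ i, |⟪e i, x⟫| < r i} = ∏ i, ENNReal.ofReal (2 * r i) := by
  have preimage_box : {x : E | ∀ i, |⟪e i, x⟫| < r i} =
      (WithLp.ofLp ∘ e.repr) ⁻¹' Set.univ.pi fun i ↦ Set.Ioo (-r i) (r i) := by
    ext x
    simp [abs_lt, e.repr_apply_apply]
  rw [preimage_box, ((PiLp.volume_preserving_ofLp ι).comp
    e.measurePreserving_repr).measure_preimage
      (MeasurableSet.univ_pi fun _ ↦ measurableSet_Ioo).nullMeasurableSet, Real.volume_pi_Ioo]
  simp_rw [sub_neg_eq_add, two_mul]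

variable (L : Submodule ℤ E) [DiscreteTopology L] [IsZLattice ℝ L]

lemma exists_mem_ne_zero_abs_inner_lt_of_covolume_lt_prod (e : OrthonormalBasis ι ℝ E)
    {r : ι → ℝ} (hr : ∀ i, 0 < r i) (h : ZLattice.covolume L < ∏ i, r i) :
    ∃ x ∈ L, x ≠ 0 ∧ ∀ i, |⟪e i, x⟫| < r i := by
  let b := Free.chooseBasis ℤ L
  let F := ZSpan.fundamentalDomain (b.ofZLatticeBasis ℝ L)
  have fund : IsAddFundamentalDomain L F := ZLattice.isAddFundamentalDomain b volume
  have F_finite : volume F ≠ ⊤ :=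
    (ZSpan.fundamentalDomain_isBounded (b.ofZLatticeBasis ℝ L)).measure_lt_top.ne
  have volume_lt : volume F * 2 ^ finrank ℝ E < volume {x : E | ∀ i, |⟪e i, x⟫| < r i} := by
    rw [volume_setOf_abs_inner_lt,
      ← ENNReal.ofReal_prod_of_nonneg fun i _ ↦ (mul_pos two_pos (hr i)).le,
      Finset.prod_mul_distrib, Finset.prod_const, Finset.card_univ, mul_comm (2 ^ _),
      ← finrank_eq_card_basis e.toBasis, ENNReal.ofReal_mul' (by positivity),
      ENNReal.ofReal_pow two_pos.le, ENNReal.ofReal_ofNat]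
    refine ENNReal.mul_lt_mul_left (by simp) (by simp) ?_
    rwa [ENNReal.lt_ofReal_iff_toReal_lt F_finite, ← measureReal_def,
      ← ZLattice.covolume_eq_measure_fundamentalDomain L volume fund]
  have : Countable L.toAddSubgroup := inferInstanceAs (Countable L)
  obtain ⟨x, hx0, hx⟩ := exists_ne_zero_mem_lattice_of_measure_mul_two_pow_lt_measure
    (L := L.toAddSubgroup) fund (by simp) (convex_setOf_abs_inner_lt e r) volume_lt
  exact ⟨x, x.2, by simpa using hx0, hx⟩

theorem inv_covolume_mul_pow_le_norm_of_forall_inner_mem_int {m : ℝ} (hm : 0 < m)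
    (hmin : ∀ x ∈ L, x ≠ 0 → m ≤ ‖x‖) {y : E} (hy : ∀ x ∈ L, ∃ n : ℤ, ⟪x, y⟫ = n)
    (hy0 : y ≠ 0) :
    (ZLattice.covolume L)⁻¹ * (m / √(finrank ℝ E)) ^ (finrank ℝ E - 1) ≤ ‖y‖ := by
  have : Nontrivial E := nontrivial_of_ne y 0 hy0
  have finrank_E_pos : 0 < finrank ℝ E := finrank_pos
  have : NeZero (finrank ℝ E) := ⟨finrank_E_pos.ne'⟩
  have norm_y_pos : 0 < ‖y‖ := norm_pos_iff.mpr hy0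
  by_contra! hlt
  obtain ⟨e, he⟩ := exists_orthonormalBasis_apply_eq_normalize
    (Fintype.card_fin (finrank ℝ E)).symm 0 hy0
  let s := m / √(finrank ℝ E)
  have s_pos : 0 < s := by positivity
  let r : Fin (finrank ℝ E) → ℝ := Function.update (fun _ ↦ s) 0 ‖y‖⁻¹
  have r_pos (i) : 0 < r i := by
    rcases eq_or_ne i 0 with rfl | hi <;> simp [r, *]
  have prod_r : ∏ i, r i = ‖y‖⁻¹ * s ^ (finrank ℝ E - 1) := by
    simp [r, Finset.prod_update_of_mem, Finset.card_sdiff]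
  have covolume_lt : ZLattice.covolume L < ∏ i, r i := by
    rwa [prod_r, lt_inv_mul_iff₀ norm_y_pos, mul_comm,
      ← lt_inv_mul_iff₀ (ZLattice.covolume_pos L volume)]
  obtain ⟨x, hxL, hx0, hx⟩ :=
    exists_mem_ne_zero_abs_inner_lt_of_covolume_lt_prod L e r_pos covolume_lt
  have inner_zero : ⟪e 0, x⟫ = 0 := by
    have inner_xy : ⟪x, y⟫ = 0 :=
      inner_eq_zero_of_abs_inner_normalize_lt (hy x hxL) (by simpa [r, he] using hx 0)
    rw [he, real_inner_smul_left, real_inner_comm, inner_xy, mul_zero]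
  refine (hmin x hxL hx0).not_gt (norm_lt_of_abs_inner_lt_div_sqrt_card e fun i ↦ ?_)
  rw [Fintype.card_fin]
  rcases eq_or_ne i 0 with rfl | hi
  · rwa [inner_zero, abs_zero]
  · simpa [r, hi] using hx i

lemma covolume_span_range_eq_abs_det [DecidableEq ι] (e : OrthonormalBasis ι ℝ E)
    (b : Basis ι ℝ E) :
    ZLattice.covolume (Submodule.span ℤ (Set.range b)) = |e.toBasis.det b| := by
  rw [ZLattice.covolume_eq_measure_fundamentalDomain _ volume
      (ZSpan.isAddFundamentalDomain b volume),
    ZSpan.measureReal_fundamentalDomain b volume e.toBasis,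
    measureReal_congr (ZSpan.fundamentalDomain_ae_parallelepiped e.toBasis volume),
    measureReal_def, e.coe_toBasis, e.volume_parallelepiped, ENNReal.toReal_one, mul_one]

end InnerProductSpace

lemma two_pow_mul_Gamma_le_factorial_mul_pi_rpow (d : ℕ) :
    2 ^ d * Real.Gamma (1 + (d : ℝ) / 2) ≤ (d.factorial : ℝ) * Real.pi ^ ((d : ℝ) / 2) := by
  have crossPolytope_subset_ball :
      {x : Fin d → ℝ | ∑ i, |x i| ^ (1 : ℝ) < 1} ⊆ {x | ∑ i, |x i| ^ (2 : ℝ) < 1} := by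
    intro x (hx : ∑ i, |x i| ^ (1 : ℝ) < 1)
    simp_rw [Real.rpow_one] at hx
    refine (Finset.sum_le_sum fun i _ ↦ ?_).trans_lt hx
    have abs_le_one : |x i| ≤ 1 :=
      (Finset.single_le_sum (fun j _ ↦ abs_nonneg (x j)) (Finset.mem_univ i)).trans hx.le
    simpa using pow_le_of_le_one (abs_nonneg (x i)) abs_le_one two_ne_zero
  have Gamma_pos : 0 < Real.Gamma ((d : ℝ) / 2 + 1) := Real.Gamma_pos_of_pos (by positivity)
  have Gamma_three_halves : Real.Gamma (1 / 2 + 1) = √Real.pi / 2 := by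
    rw [Real.Gamma_add_one (by norm_num), Real.Gamma_one_half_eq]
    ring
  have volume_le := measure_mono (μ := volume) crossPolytope_subset_ball
  rw [volume_sum_rpow_lt_one (Fin d) le_rfl, volume_sum_rpow_lt_one (Fin d) one_le_two,
    ENNReal.ofReal_le_ofReal_iff (by positivity), Fintype.card_fin, Gamma_three_halves, div_one,
    div_one, Real.Gamma_nat_eq_factorial, one_add_one_eq_two, Real.Gamma_two, mul_one,
    mul_div_cancel₀ _ two_ne_zero, div_le_div_iff₀ (by positivity) Gamma_pos] at volume_le
  rwa [add_comm, Real.rpow_div_two_eq_sqrt _ Real.pi_pos.le, Real.rpow_natCast, mul_comm _ (√_ ^ d)]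

section Lattice

variable {d : ℕ} {Λ : Set (Euc d)}

lemma one_le_finrank_span_inter_closedBall_iff {r : ℝ} :
    1 ≤ finrank ℝ (Submodule.span ℝ (Λ ∩ Metric.closedBall (0 : Euc d) r)) ↔
      ∃ x ∈ Λ, x ≠ 0 ∧ ‖x‖ ≤ r := by
  rw [Submodule.one_le_finrank_iff, Ne, Submodule.span_eq_bot]
  simp only [Set.mem_inter_iff, mem_closedBall_zero_iff]
  grind

lemma succMin_one_le_norm {x : Euc d} (hx : x ∈ Λ) (hx0 : x ≠ 0) : succMin Λ 1 ≤ ‖x‖ :=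
  csInf_le ⟨0, fun _ hr ↦ hr.1.le⟩
    ⟨norm_pos_iff.mpr hx0, one_le_finrank_span_inter_closedBall_iff.mpr ⟨x, hx, hx0, le_rfl⟩⟩

lemma le_succMin_one {m : ℝ} (hΛ : ∃ x ∈ Λ, x ≠ 0) (hm : ∀ x ∈ Λ, x ≠ 0 → m ≤ ‖x‖) :
    m ≤ succMin Λ 1 := by
  obtain ⟨x, hx, hx0⟩ := hΛ
  refine le_csInf ⟨‖x‖, norm_pos_iff.mpr hx0,
    one_le_finrank_span_inter_closedBall_iff.mpr ⟨x, hx, hx0, le_rfl⟩⟩ fun r hr ↦ ?_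
  obtain ⟨z, hz, hz0, hzr⟩ := one_le_finrank_span_inter_closedBall_iff.mp hr.2
  exact (hm z hz hz0).trans hzr

theorem inv_covolume_mul_pow_le_succMin_dualLat (hd : d ≠ 0) (L : Submodule ℤ (Euc d))
    [DiscreteTopology L] [IsZLattice ℝ L] {m : ℝ} (hm : 0 < m)
    (hL : m ≤ succMin (L : Set (Euc d)) 1) :
    (ZLattice.covolume L)⁻¹ * (m / √d) ^ (d - 1) ≤ succMin (dualLat (L : Set (Euc d))) 1 := by
  have : NeZero d := ⟨hd⟩
  obtain ⟨y₀, hy₀, hy₀L⟩ := exists_ne_zero_forall_inner_mem_int L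
  refine le_succMin_one ⟨y₀, hy₀L, hy₀⟩ fun y hy hy0 ↦ ?_
  simpa only [finrank_euclideanSpace_fin] using
    inv_covolume_mul_pow_le_norm_of_forall_inner_mem_int L hm
      (fun x hx hx0 ↦ hL.trans (succMin_one_le_norm hx hx0)) hy hy0

variable {T : Matrix (Fin d) (Fin d) ℝ}

/-- The columns of an invertible matrix `T` as a basis of `ℝ^d`. -/
def columnBasis (hT : IsUnit T.det) : Basis (Fin d) ℝ (Euc d) :=
  let e := (EuclideanSpace.basisFun (Fin d) ℝ).toBasis
  e.map (T.toLinearEquiv e hT)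

lemma columnBasis_apply (hT : IsUnit T.det) (i j : Fin d) : columnBasis hT j i = T i j := by
  rw [columnBasis, Basis.map_apply, Matrix.toLinearEquiv_apply, Matrix.toLin_self]
  simp [Pi.single_apply]

lemma det_columnBasis (hT : IsUnit T.det) :
    (EuclideanSpace.basisFun (Fin d) ℝ).toBasis.det (columnBasis hT) = T.det := by
  rw [Basis.det_apply]
  congr 1
  ext i j
  simp [Basis.toMatrix_apply, columnBasis_apply]

lemma IsLatticeOf.eq_span_range_columnBasis (h : IsLatticeOf Λ T) :
    Λ = Submodule.span ℤ (Set.range (columnBasis h.1)) := by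
  refine h.2.trans (Set.ext fun v ↦ ?_)
  rw [SetLike.mem_coe, Submodule.mem_span_range_iff_exists_fun]
  refine exists_congr fun k ↦ ?_
  simp [PiLp.ext_iff, columnBasis_apply, mul_comm, eq_comm]

end Lattice

lemma Gamma_ratio_mul_div_pow_le_div_sqrt_pow (d : ℕ) {c : ℝ} (hc : 0 ≤ c) :
    2 ^ d * Real.Gamma (1 + (d : ℝ) / 2) / ((d.factorial : ℝ) * Real.pi ^ ((d : ℝ) / 2)) *
      (c / d) ^ (d - 1) ≤ (c / √d) ^ (d - 1) := by
  have ratio_le_one : 2 ^ d * Real.Gamma (1 + (d : ℝ) / 2) /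
      ((d.factorial : ℝ) * Real.pi ^ ((d : ℝ) / 2)) ≤ 1 :=
    div_le_one_of_le₀ (two_pow_mul_Gamma_le_factorial_mul_pi_rpow d) (by positivity)
  have div_le_div_sqrt : c / d ≤ c / √d := by
    rcases d.eq_zero_or_pos with rfl | hd
    · simp
    · gcongr
      exact Real.sqrt_le_self_iff.mpr (.inr (mod_cast hd))
  exact (mul_le_of_le_one_left (by positivity) ratio_le_one).trans (by gcongr)

lemma mul_rpow_neg_one_div_pow_pred {d : ℕ} (hd : 1 ≤ d) {N : ℝ} (hN : 0 < N) :
    N * (N ^ (-(1 : ℝ) / d)) ^ (d - 1) = N ^ ((1 : ℝ) / d) := by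
  have exponent_eq : 1 + -(1 : ℝ) / d * (d - 1 : ℕ) = 1 / d := by
    rw [Nat.cast_sub hd]
    field_simp
    push_cast
    ring
  rw [← exponent_eq, Real.rpow_add hN, Real.rpow_one, Real.rpow_mul_natCast hN.le]

theorem stmt10_general {d : ℕ} (hd : 1 ≤ d) {N c₁ : ℝ} (hc : 0 < c₁)
    {Λ : Set (Euc d)} {T : Matrix (Fin d) (Fin d) ℝ} (hT : IsLatticeOf Λ T)
    (hdet : |T.det| = 1 / N) (hlam : c₁ * N ^ (-(1 : ℝ) / d) ≤ succMin Λ 1) :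
    (c₁ / √d) ^ (d - 1) * N ^ ((1 : ℝ) / d) ≤ succMin (dualLat Λ) 1 := by
  have N_pos : 0 < N := one_div_pos.mp (hdet ▸ abs_pos.mpr hT.1.ne_zero)
  let L := Submodule.span ℤ (Set.range (columnBasis hT.1))
  have hL : Λ = L := hT.eq_span_range_columnBasis
  have covolume_L : ZLattice.covolume L = 1 / N := by
    rw [covolume_span_range_eq_abs_det (EuclideanSpace.basisFun (Fin d) ℝ), det_columnBasis, hdet]
  calc (c₁ / √d) ^ (d - 1) * N ^ ((1 : ℝ) / d)
      = (ZLattice.covolume L)⁻¹ * (c₁ * N ^ (-(1 : ℝ) / d) / √d) ^ (d - 1) := by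
        rw [covolume_L, inv_div, div_one, ← mul_rpow_neg_one_div_pow_pred hd N_pos,
          mul_div_right_comm, mul_pow]
        ring
    _ ≤ succMin (dualLat (L : Set (Euc d))) 1 :=
        inv_covolume_mul_pow_le_succMin_dualLat (by lia) L (by positivity) (hL ▸ hlam)
    _ = succMin (dualLat Λ) 1 := by rw [hL]

theorem stmt10 {d : ℕ} (hd : 1 ≤ d) (N : ℕ) (hN : 1 ≤ N) (c₁ : ℝ) (hc : 0 < c₁)
    (Λ : Set (Euc d)) (T : Matrix (Fin d) (Fin d) ℝ) (hT : IsLatticeOf Λ T)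
    (hdet : |T.det| = 1 / N)
    (hlam : succMin Λ 1 ≥ c₁ * (N : ℝ) ^ (-(1 : ℝ) / d)) :
    succMin (dualLat Λ) 1 ≥
      (2 ^ d * Real.Gamma (1 + (d : ℝ) / 2) /
          ((d.factorial : ℝ) * Real.pi ^ ((d : ℝ) / 2))) *
        (c₁ / d) ^ (d - 1) * (N : ℝ) ^ ((1 : ℝ) / d) :=
  (mul_le_mul_of_nonneg_right (Gamma_ratio_mul_div_pow_le_div_sqrt_pow d hc.le)
    (by positivity)).trans (stmt10_general hd hc hT hdet hlam)

end
end

section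
/- Let d ≥ 1, let N ≥ 1 be an integer, let c₁ > 0, and let Λ ⊂ ℝ^d be a full-rank lattice with a generating matrix of determinant ±1/N such that λ₁(Λ) ≥ c₁ · N^{−1/d}, and let P = Λ ∩ [0,1)^d have exactly N points. Then the isotropic discrepancy of P satisfies J(P) ≤ (d^d · 2^{d+2} · d! · π^{d/2} / (c₁^{d−1} · Γ(1+d/2))) · N^{−1/d}; in particular J(P) ≤ C · N^{−1/d} for a constant C depending only on d and c₁. -/
open scoped RealInnerProductSpace

noncomputable section

/-- Isotropic discrepancy of an `N`-point set `P ⊂ [0,1)^d`: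
the supremum over all convex subsets `C` of `[0,1)^d` of `||P ∩ C|/N - vol(C)|`. -/
def isoDisc {d : ℕ} (P : Set (Euc d)) (N : ℕ) : ℝ :=
  ⨆ C : {C : Set (Euc d) // Convex ℝ C ∧ C ⊆ halfOpenCube d},
    |((P ∩ (C : Set (Euc d))).ncard : ℝ) / N -
      (MeasureTheory.volume (C : Set (Euc d))).toReal|

/-!
Let `D = 1 / N` be the covolume and `lam` a lower bound on the lengths of nonzero lattice vectors.
Minkowski's convex body theorem, applied to boxes that are narrow (`lam / √d`) in all directions but
one, shows that the lattice vectors of length `O(D / lam ^ (d - 1))` span the space. Hence the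
lattice translates of a cube `B` of side `a = O(D / lam ^ (d - 1))` cover the space, and averaging
over a fundamental domain gives `vol (C ⊖ B) ≤ D * |Λ ∩ C| ≤ vol (C + B)` for convex `C`, where
`C ⊖ B` is the Minkowski difference. If `C` lies in the unit cube, these two volumes are close to
`vol C`: adding or eroding one edge of `B` at a time, the part gained or lost meets no translate of
itself by a positive multiple of that edge, so Blichfeldt's theorem bounds its volume by
`(1 + a) ^ (d - 1) * a`. This bypasses the dual lattice and the transference theorem.
-/

open Set MeasureTheory Module
open scoped Pointwise ENNReal

section Counting

section VAdd

variable {G α : Type*} [AddGroup G] [Countable G] [AddAction G α] [MeasurableSpace α]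
  [MeasurableConstVAdd G α] {μ : Measure α} [VAddInvariantMeasure G α μ] {F A : Set α}

lemma measure_eq_setLIntegral_encard_vadd_mem (hF : IsAddFundamentalDomain G F μ)
    (hA : NullMeasurableSet A μ) :
    μ A = ∫⁻ x in F, ({g : G | g +ᵥ x ∈ A}.encard : ℝ≥0∞) ∂μ := by
  have hmeas (g : G) : AEMeasurable (fun x ↦ A.indicator (1 : α → ℝ≥0∞) (g +ᵥ x))
      (μ.restrict F) :=
    ((aemeasurable_const.indicator₀ hA).comp_quasiMeasurePreserving
      (measurePreserving_vadd g μ).quasiMeasurePreserving).restrict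
  calc μ A = ∫⁻ x, A.indicator 1 x ∂μ := (lintegral_indicator_one₀ hA).symm
    _ = ∑' g : G, ∫⁻ x in F, A.indicator 1 (g +ᵥ x) ∂μ := hF.lintegral_eq_tsum'' _
    _ = ∫⁻ x in F, ∑' g : G, A.indicator 1 (g +ᵥ x) ∂μ := (lintegral_tsum hmeas).symm
    _ = ∫⁻ x in F, ({g : G | g +ᵥ x ∈ A}.encard : ℝ≥0∞) ∂μ :=
      lintegral_congr fun x ↦ by
        rw [← ENNReal.tsum_set_one, tsum_subtype {g : G | g +ᵥ x ∈ A} fun _ ↦ (1 : ℝ≥0∞)]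
        rfl

end VAdd

/-- The Minkowski difference of `C` and `B`: the points whose translates of `B` lie in `C`. It is
the inner counterpart of the Minkowski sum `C + B`. -/
def erosion {E : Type*} [Add E] (C B : Set E) : Set E := {x | ∀ b ∈ B, x + b ∈ C}

variable {E : Type*} [AddCommGroup E]

lemma erosion_zero (C : Set E) : erosion C 0 = C := by
  simp [erosion]

lemma erosion_add (C A B : Set E) : erosion C (A + B) = erosion (erosion C A) B := by
  ext x
  simp only [erosion, mem_ofPred_eq, mem_add]
  constructor
  · intro h b hb a ha
    rw [add_assoc, add_comm b]
    exact h _ ⟨a, ha, b, hb, rfl⟩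
  · rintro h _ ⟨a, ha, b, hb, rfl⟩
    rw [add_comm a, ← add_assoc]
    exact h b hb a ha

lemma erosion_subset {C B : Set E} (hB : 0 ∈ B) : erosion C B ⊆ C := fun x hx ↦ by
  simpa using hx 0 hB

lemma convex_erosion [Module ℝ E] {C : Set E} (hC : Convex ℝ C) (B : Set E) :
    Convex ℝ (erosion C B) := by
  have : erosion C B = ⋂ b ∈ B, (fun x ↦ x + b) ⁻¹' C := by
    ext x
    simp [erosion]
  rw [this]
  exact convex_iInter₂ fun b _ ↦ hC.translate_preimage_left b

variable [MeasurableSpace E] [MeasurableAdd E] {μ : Measure E} [μ.IsAddLeftInvariant]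
  {L : AddSubgroup E} [Countable L] {F B C : Set E}

lemma encard_inter_mul_measure_le_measure_add (hF : IsAddFundamentalDomain L F μ)
    (hLB : (L : Set E) + B = univ) (hCB : NullMeasurableSet (C + B) μ) :
    (((L : Set E) ∩ C).encard : ℝ≥0∞) * μ F ≤ μ (C + B) := by
  rw [measure_eq_setLIntegral_encard_vadd_mem hF hCB, ← setLIntegral_const]
  refine lintegral_mono fun x ↦ ENat.toENNReal_mono ?_
  obtain ⟨l, hl, y, hy, rfl⟩ : x ∈ (L : Set E) + B := hLB ▸ mem_univ x
  have hsub : (L : Set E) ∩ C ⊆ (fun g : L ↦ g + l) '' {g : L | g +ᵥ (l + y) ∈ C + B} := by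
    rintro c ⟨hcL, hcC⟩
    exact ⟨⟨c - l, sub_mem hcL hl⟩, ⟨c, hcC, y, hy, by simp [AddSubgroup.vadd_def, ← add_assoc]⟩,
      by simp⟩
  exact (encard_le_encard hsub).trans (encard_image_le _ _)

lemma measure_erosion_le_encard_inter_mul_measure (hF : IsAddFundamentalDomain L F μ)
    (hLB : (L : Set E) + B = univ) (hCB : NullMeasurableSet (erosion C B) μ) :
    μ (erosion C B) ≤ (((L : Set E) ∩ C).encard : ℝ≥0∞) * μ F := by
  rw [measure_eq_setLIntegral_encard_vadd_mem hF hCB, ← setLIntegral_const]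
  refine lintegral_mono fun x ↦ ENat.toENNReal_mono ?_
  obtain ⟨l, hl, y, hy, hx⟩ : -x ∈ (L : Set E) + B := hLB ▸ mem_univ (-x)
  refine encard_le_encard_of_injOn (f := fun g : L ↦ (g : E) - l) (fun g hg ↦ ?_)
    fun g _ g' _ h ↦ by simpa using h
  refine ⟨sub_mem g.2 hl, ?_⟩
  have hmem : (g : E) + x + y ∈ C := hg y hy
  have hxy : x + y = -l := by rw [← neg_neg x, ← hx]; simp
  rwa [add_assoc, hxy, ← sub_eq_add_neg] at hmem

end Counting

section Segments

variable {E : Type*} [AddCommGroup E] [Module ℝ E] {K : Set E} {v x : E}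

lemma mem_segment_zero_left : x ∈ segment ℝ 0 v ↔ ∃ θ ∈ Icc (0 : ℝ) 1, θ • v = x := by
  simp [segment_eq_image']

lemma add_smul_mem_of_convex (hK : Convex ℝ K) {p q r : ℝ} (hp : x + p • v ∈ K)
    (hr : x + r • v ∈ K) (hpq : p ≤ q) (hqr : q ≤ r) : x + q • v ∈ K := by
  have hline : Convex ℝ (AffineMap.lineMap x (x + v) ⁻¹' K : Set ℝ) := hK.affine_preimage _
  have hmem (t : ℝ) : t ∈ (AffineMap.lineMap x (x + v) ⁻¹' K : Set ℝ) ↔ x + t • v ∈ K := by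
    simp [AffineMap.lineMap_apply, add_comm]
  exact (hmem q).1 (hline.ordConnected.out ((hmem p).2 hp) ((hmem r).2 hr) ⟨hpq, hqr⟩)

lemma mem_of_add_nsmul_mem_add_segment (hK : Convex ℝ K) {k : ℕ} (hk : 1 ≤ k)
    (hx : x ∈ K + segment ℝ 0 v) (hxk : x + k • v ∈ K + segment ℝ 0 v) : x ∈ K := by
  obtain ⟨p, hp, _, hs, hpx⟩ := hx
  obtain ⟨q, hq, _, ht, hqx⟩ := hxk
  obtain ⟨s, ⟨hs0, -⟩, rfl⟩ := mem_segment_zero_left.1 hs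
  obtain ⟨t, ⟨-, ht1⟩, rfl⟩ := mem_segment_zero_left.1 ht
  have hk' : (1 : ℝ) ≤ k := mod_cast hk
  have hp' : x + (-s) • v ∈ K := by
    rwa [neg_smul, ← sub_eq_add_neg, ← hpx, add_sub_cancel_right]
  have hq' : x + (k - t) • v ∈ K := by
    rwa [sub_smul, Nat.cast_smul_eq_nsmul, ← add_sub_assoc, ← hqx, add_sub_cancel_right]
  simpa using add_smul_mem_of_convex hK hp' hq' (q := 0) (by linarith) (by linarith)

lemma mem_erosion_segment_of_add_nsmul_mem (hK : Convex ℝ K) {k : ℕ} (hk : 1 ≤ k) (hx : x ∈ K)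
    (hxk : x + k • v ∈ K) : x ∈ erosion K (segment ℝ 0 v) := by
  intro _ hs
  obtain ⟨s, ⟨hs0, hs1⟩, rfl⟩ := mem_segment_zero_left.1 hs
  have hk' : (1 : ℝ) ≤ k := mod_cast hk
  exact add_smul_mem_of_convex hK (p := 0) (r := k) (by simpa)
    (by rwa [Nat.cast_smul_eq_nsmul]) hs0 (hs1.trans hk')

end Segments

section Boxes

lemma volume_setOf_forall_repr_mem {ι E : Type*} [Fintype ι] [NormedAddCommGroup E]
    [InnerProductSpace ℝ E] [FiniteDimensional ℝ E] [MeasurableSpace E] [BorelSpace E]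
    (e : OrthonormalBasis ι ℝ E) (s : ι → Set ℝ) :
    volume {x | ∀ i, e.repr x i ∈ s i} = ∏ i, volume (s i) := by
  have hpre : {x | ∀ i, e.repr x i ∈ s i} =
      e.measurableEquiv ⁻¹' ((MeasurableEquiv.toLp 2 (ι → ℝ)).symm ⁻¹' univ.pi s) := by
    ext x
    simp [OrthonormalBasis.measurableEquiv]
  rw [hpre, e.measurePreserving_measurableEquiv.measure_preimage_equiv,
    (EuclideanSpace.volume_preserving_symm_measurableEquiv_toLp ι).measure_preimage_equiv,
    volume_pi_pi]

variable {ι : Type*} [Fintype ι]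

lemma volume_setOf_forall_mem (s : ι → Set ℝ) :
    volume {x : EuclideanSpace ℝ ι | ∀ i, x i ∈ s i} = ∏ i, volume (s i) :=
  volume_setOf_forall_repr_mem (EuclideanSpace.basisFun ι ℝ) s

lemma exists_fundamentalDomain_diagonal {w : ι → ℝ} (hw : ∀ i, 0 < w i) :
    ∃ b : Basis ι ℝ (EuclideanSpace ℝ ι),
      (∀ x ∈ Submodule.span ℤ (range b), ∃ n : ι → ℤ, ∀ i, x i = n i * w i) ∧
      volume (ZSpan.fundamentalDomain b) = ENNReal.ofReal (∏ i, w i) := by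
  classical
  let e := (EuclideanSpace.basisFun ι ℝ).toBasis
  let b := e.isUnitSMul fun i ↦ (hw i).ne'.isUnit
  have hb (i : ι) : b i = EuclideanSpace.single i (w i) := by
    ext j
    by_cases hj : j = i <;> simp [b, e, Basis.isUnitSMul_apply, hj]
  have hrepr (x : EuclideanSpace ℝ ι) (i : ι) : x i = b.repr x i * w i := by
    conv_lhs => rw [← b.sum_repr x]
    simp [hb, Pi.single_apply, -Basis.sum_repr]
  refine ⟨b, fun x hx ↦ ?_, ?_⟩
  · choose n hn using (b.mem_span_iff_repr_mem ℤ x).1 hx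
    exact ⟨n, fun i ↦ by rw [hrepr, ← hn i]; simp⟩
  · have hset : ZSpan.fundamentalDomain b = {x | ∀ i, x i ∈ Ico 0 (w i)} := by
      ext x
      refine forall_congr' fun i ↦ ?_
      rw [mem_Ico, mem_Ico, hrepr x i, mul_nonneg_iff_of_pos_right (hw i),
        mul_lt_iff_lt_one_left (hw i)]
    rw [hset, volume_setOf_forall_mem, ENNReal.ofReal_prod_of_nonneg fun i _ ↦ (hw i).le]
    simp

lemma exists_ne_forall_sub_eq_int_mul_of_prod_lt_volume {T : Set (EuclideanSpace ℝ ι)}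
    (hT : NullMeasurableSet T) {w : ι → ℝ} (hw : ∀ i, 0 < w i)
    (hlt : ENNReal.ofReal (∏ i, w i) < volume T) :
    ∃ p ∈ T, ∃ q ∈ T, p ≠ q ∧ ∃ n : ι → ℤ, ∀ i, p i - q i = n i * w i := by
  obtain ⟨b, hb, hvol⟩ := exists_fundamentalDomain_diagonal hw
  have : Countable (Submodule.span ℤ (range b)).toAddSubgroup :=
    inferInstanceAs (Countable (Submodule.span ℤ (range b)))
  rw [← hvol] at hlt
  obtain ⟨x, y, hxy, hmeet⟩ := exists_pair_mem_lattice_not_disjoint_vadd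
    (ZSpan.isAddFundamentalDomain' b volume) hT hlt
  obtain ⟨_, ⟨p, hp, rfl⟩, q, hq, hpq⟩ := Set.not_disjoint_iff.1 hmeet
  have hpq : (y : EuclideanSpace ℝ ι) + q = x + p := hpq
  have hsub : p - q = (y : EuclideanSpace ℝ ι) - x := by
    rw [sub_eq_sub_iff_add_eq_add, hpq, add_comm]
  refine ⟨p, hp, q, hq, fun h ↦ hxy ?_, ?_⟩
  · rw [h, sub_self, eq_comm, sub_eq_zero] at hsub
    exact (Subtype.ext hsub).symm
  · obtain ⟨n, hn⟩ := hb _ (sub_mem y.2 x.2)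
    exact ⟨n, fun i ↦ by rw [← hn, ← hsub, PiLp.sub_apply]⟩

variable [DecidableEq ι]

-- Blichfeldt's theorem for the lattice of side length `a` in direction `i` and `M` in all others:
-- as `T` has width less than `M`, two congruent points of `T` differ only in direction `i`.
lemma volume_le_of_add_nsmul_single_notMem {T : Set (EuclideanSpace ℝ ι)}
    (hT : NullMeasurableSet T) {M a : ℝ} (hM : 0 < M) (ha : 0 < a) (i : ι)
    (hTM : ∀ x ∈ T, ∀ j, x j ∈ Ico 0 M)
    (hTa : ∀ x ∈ T, ∀ k : ℕ, 1 ≤ k → x + k • EuclideanSpace.single i a ∉ T) :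
    volume T ≤ ENNReal.ofReal (M ^ (Fintype.card ι - 1) * a) := by
  by_contra! hlt
  let w : ι → ℝ := Function.update (fun _ ↦ M) i a
  have hw (j : ι) : 0 < w j := by
    by_cases hj : j = i <;> simp [w, hj, hM, ha]
  have hprod : ∏ j, w j = M ^ (Fintype.card ι - 1) * a := by
    rw [Finset.prod_update_of_mem (Finset.mem_univ i), Finset.prod_const, mul_comm]
    simp [Finset.card_sdiff]
  obtain ⟨p, hp, q, hq, hpq, n, hn⟩ :=
    exists_ne_forall_sub_eq_int_mul_of_prod_lt_volume hT hw (hprod ▸ hlt)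
  have hnj (j : ι) (hj : j ≠ i) : n j = 0 := by
    have hwidth : |p j - q j| < M :=
      abs_sub_lt_of_nonneg_of_lt (hTM p hp j).1 (hTM p hp j).2 (hTM q hq j).1 (hTM q hq j).2
    rw [hn, show w j = M from Function.update_of_ne hj _ _, abs_mul, abs_of_pos hM,
      mul_lt_iff_lt_one_left hM, ← Int.cast_abs] at hwidth
    exact Int.abs_lt_one_iff.1 (mod_cast hwidth)
  have hpq' : p = q + n i • EuclideanSpace.single i a := by
    ext j
    rw [PiLp.add_apply, ← sub_eq_iff_eq_add', hn]
    by_cases hj : j = i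
    · subst hj; simp [w]
    · simp [hnj j hj, hj]
  rcases lt_trichotomy (n i) 0 with hneg | hzero | hpos
  · refine hTa p hp (-n i).toNat (by omega) ?_
    rw [← natCast_zsmul, Int.toNat_of_nonneg (by omega), hpq', neg_smul, add_neg_cancel_right]
    exact hq
  · exact hpq (by simpa [hzero] using hpq')
  · refine hTa q hq (n i).toNat (by omega) ?_
    rw [← natCast_zsmul, Int.toNat_of_nonneg (by omega), ← hpq']
    exact hp

variable {K : Set (EuclideanSpace ℝ ι)} {M a : ℝ}

lemma volume_add_segment_single_le (hK : Convex ℝ K) (hM : 0 < M) (ha : 0 < a) (i : ι)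
    (hKM : ∀ x ∈ K + segment ℝ 0 (EuclideanSpace.single i a), ∀ j, x j ∈ Ico 0 M) :
    volume (K + segment ℝ 0 (EuclideanSpace.single i a)) ≤
      volume K + ENNReal.ofReal (M ^ (Fintype.card ι - 1) * a) := by
  have hnull := (hK.add (convex_segment 0 (EuclideanSpace.single i a))).nullMeasurableSet volume
  refine (tsub_le_iff_left.1 le_measure_sdiff).trans (add_le_add_right ?_ _)
  refine volume_le_of_add_nsmul_single_notMem (hnull.diff (hK.nullMeasurableSet _)) hM ha i
    (fun x hx ↦ hKM x hx.1) fun x hx k hk hxk ↦ hx.2 ?_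
  exact mem_of_add_nsmul_mem_add_segment hK hk hx.1 hxk.1

lemma volume_le_volume_erosion_segment_single_add (hK : Convex ℝ K) (hM : 0 < M) (ha : 0 < a)
    (i : ι) (hKM : ∀ x ∈ K, ∀ j, x j ∈ Ico 0 M) :
    volume K ≤ volume (erosion K (segment ℝ 0 (EuclideanSpace.single i a))) +
      ENNReal.ofReal (M ^ (Fintype.card ι - 1) * a) := by
  have hnull := (convex_erosion hK (segment ℝ 0 (EuclideanSpace.single i a))).nullMeasurableSet
    volume
  refine (tsub_le_iff_left.1 le_measure_sdiff).trans (add_le_add_right ?_ _)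
  refine volume_le_of_add_nsmul_single_notMem ((hK.nullMeasurableSet _).diff hnull) hM ha i
    (fun x hx ↦ hKM x hx.1) fun x hx k hk hxk ↦ hx.2 ?_
  exact mem_erosion_segment_of_add_nsmul_mem hK hk hx.1 hxk.1

end Boxes

section CubeFace

variable {ι : Type*} [DecidableEq ι] {a : ℝ} {S : Finset ι} {i : ι} {x : EuclideanSpace ℝ ι}

lemma mem_segment_zero_single (ha : 0 < a) :
    x ∈ segment ℝ 0 (EuclideanSpace.single i a) ↔ x i ∈ Icc 0 a ∧ ∀ j ≠ i, x j = 0 := by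
  rw [mem_segment_zero_left]
  constructor
  · rintro ⟨θ, ⟨hθ0, hθ1⟩, rfl⟩
    exact ⟨by simp [mul_nonneg hθ0 ha.le, mul_le_of_le_one_left ha.le hθ1],
      fun j hj ↦ by simp [hj]⟩
  · rintro ⟨⟨h0, h1⟩, hj⟩
    refine ⟨x i / a, ⟨by positivity, (div_le_one ha).2 h1⟩, ?_⟩
    ext j
    by_cases h : j = i
    · subst h; simp [ha.ne']
    · simp [h, hj j h]

/-- The face of the cube `[0, a]^ι` at the origin that is spanned by the directions in `S`. It is
encoded as the Minkowski sum of its edges, to be built up one edge at a time. -/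
def cubeFace (a : ℝ) (S : Finset ι) : Set (EuclideanSpace ℝ ι) :=
  ∑ i ∈ S, segment ℝ 0 (EuclideanSpace.single i a)

lemma convex_cubeFace (a : ℝ) (S : Finset ι) : Convex ℝ (cubeFace a S) :=
  convex_sum _ fun _ _ ↦ convex_segment _ _

lemma cubeFace_insert (a : ℝ) (hi : i ∉ S) :
    cubeFace a (insert i S) = cubeFace a S + segment ℝ 0 (EuclideanSpace.single i a) := by
  rw [cubeFace, Finset.sum_insert hi, add_comm, cubeFace]

lemma mem_cubeFace (ha : 0 < a) :
    x ∈ cubeFace a S ↔ ∀ i, x i ∈ if i ∈ S then Icc 0 a else {0} := by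
  rw [cubeFace, mem_finsetSum]
  constructor
  · rintro ⟨g, hg, rfl⟩ j
    have hgj : ∀ i ∈ S, i ≠ j → g i j = 0 := fun i hi hij ↦
      ((mem_segment_zero_single ha).1 (hg hi)).2 j hij.symm
    rw [WithLp.ofLp_sum, Finset.sum_apply]
    split_ifs with hj
    · rw [Finset.sum_eq_single_of_mem j hj hgj]
      exact ((mem_segment_zero_single ha).1 (hg hj)).1
    · exact Finset.sum_eq_zero fun i hi ↦ hgj i hi (ne_of_mem_of_not_mem hi hj)
  · intro hx
    refine ⟨fun i ↦ EuclideanSpace.single i (x i), fun {i} hi ↦ ?_, ?_⟩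
    · have hxi := hx i
      rw [if_pos hi] at hxi
      exact (mem_segment_zero_single ha).2 ⟨by simpa using hxi, fun j hj ↦ by simp [hj]⟩
    · ext j
      have hxj := hx j
      by_cases hj : j ∈ S
      · simp [hj, Pi.single_apply]
      · simp_all [Pi.single_apply]

lemma apply_mem_Icc_of_mem_cubeFace (ha : 0 < a) (hx : x ∈ cubeFace a S) (i : ι) :
    x i ∈ Icc 0 a := by
  have hxi := (mem_cubeFace ha).1 hx i
  split_ifs at hxi
  · exact hxi
  · rw [mem_singleton_iff.1 hxi]
    exact left_mem_Icc.2 ha.le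

lemma zero_mem_cubeFace (ha : 0 < a) : 0 ∈ cubeFace a S :=
  (mem_cubeFace ha).2 fun i ↦ by split_ifs <;> simp [ha.le]

variable [Fintype ι] {C : Set (EuclideanSpace ℝ ι)} {m : ℝ}

lemma volume_add_cubeFace_le (hC : Convex ℝ C) (hm : 0 ≤ m)
    (hCm : ∀ x ∈ C, ∀ i, x i ∈ Ico 0 m) (ha : 0 < a) (S : Finset ι) :
    volume (C + cubeFace a S) ≤
      volume C + S.card * ENNReal.ofReal ((m + a) ^ (Fintype.card ι - 1) * a) := by
  induction S using Finset.induction_on with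
  | empty => simp [cubeFace]
  | insert i S hi ih =>
    have hbox : ∀ x ∈ C + cubeFace a (insert i S), ∀ j, x j ∈ Ico 0 (m + a) := by
      rintro _ ⟨c, hc, y, hy, rfl⟩ j
      have hcj := hCm c hc j
      have hyj := apply_mem_Icc_of_mem_cubeFace ha hy j
      exact ⟨add_nonneg hcj.1 hyj.1, add_lt_add_of_lt_of_le hcj.2 hyj.2⟩
    rw [cubeFace_insert a hi, ← add_assoc] at hbox ⊢
    grw [volume_add_segment_single_le (hC.add (convex_cubeFace a S)) (by positivity) ha i hbox, ih,
      Finset.card_insert_of_notMem hi, Nat.cast_succ, add_one_mul, add_assoc]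

lemma volume_le_volume_erosion_cubeFace_add (hC : Convex ℝ C) (hm : 0 ≤ m)
    (hCm : ∀ x ∈ C, ∀ i, x i ∈ Ico 0 m) (ha : 0 < a) (S : Finset ι) :
    volume C ≤ volume (erosion C (cubeFace a S)) +
      S.card * ENNReal.ofReal ((m + a) ^ (Fintype.card ι - 1) * a) := by
  induction S using Finset.induction_on with
  | empty => simp [cubeFace, erosion_zero]
  | insert i S hi ih =>
    have hbox : ∀ x ∈ erosion C (cubeFace a S), ∀ j, x j ∈ Ico 0 (m + a) := fun x hx j ↦
      Ico_subset_Ico_right (by linarith) (hCm x (erosion_subset (zero_mem_cubeFace ha) hx) j)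
    grw [ih, volume_le_volume_erosion_segment_single_add (convex_erosion hC _) (by positivity) ha i
      hbox, cubeFace_insert a hi, erosion_add, Finset.card_insert_of_notMem hi, Nat.cast_succ,
      add_one_mul, add_assoc, add_comm (ENNReal.ofReal _)]

end CubeFace

section ShortVectors

variable {ι E : Type*} [Fintype ι] [NormedAddCommGroup E] [InnerProductSpace ℝ E]

lemma norm_lt_of_forall_abs_repr_lt [Nonempty ι] (e : OrthonormalBasis ι ℝ E) {x : E} {m : ℝ}
    (hx : ∀ i, |e.repr x i| < m) : ‖x‖ < √(Fintype.card ι) * m := by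
  have hm : 0 ≤ m := (abs_nonneg _).trans (hx (Classical.arbitrary ι)).le
  refine lt_of_pow_lt_pow_left₀ 2 (by positivity) ?_
  calc ‖x‖ ^ 2 = ∑ i, |e.repr x i| ^ 2 := by
        rw [← e.repr.norm_map x, EuclideanSpace.norm_sq_eq]
        rfl
    _ < ∑ _i : ι, m ^ 2 := Finset.sum_lt_sum_of_nonempty Finset.univ_nonempty fun i _ ↦
        pow_lt_pow_left₀ (hx i) (abs_nonneg _) two_ne_zero
    _ = (√(Fintype.card ι) * m) ^ 2 := by
        rw [mul_pow, Real.sq_sqrt (Nat.cast_nonneg _)]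
        simp

variable [FiniteDimensional ℝ E]

lemma exists_orthonormalBasis_apply_mem_orthogonal (hι : finrank ℝ E = Fintype.card ι) (i : ι)
    {W : Submodule ℝ E} (hW : W ≠ ⊤) : ∃ e : OrthonormalBasis ι ℝ E, e i ∈ Wᗮ := by
  obtain ⟨u, huW, hu⟩ := Submodule.exists_mem_ne_zero_of_ne_bot
    (Submodule.orthogonal_eq_bot_iff.not.2 hW)
  have hunit : Orthonormal ℝ (({i} : Set ι).domRestrict fun _ ↦ ‖u‖⁻¹ • u) := by
    refine ⟨fun _ ↦ norm_smul_inv_norm hu, fun j k hjk ↦ (hjk ?_).elim⟩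
    exact Subsingleton.elim j k
  obtain ⟨e, he⟩ := hunit.exists_orthonormalBasis_extension_of_card_eq hι
  exact ⟨e, he i rfl ▸ Wᗮ.smul_mem _ huW⟩

variable [MeasurableSpace E] [BorelSpace E] {L : Submodule ℤ E} [DiscreteTopology L]
  [IsZLattice ℝ L]

variable (L) in
lemma exists_isAddFundamentalDomain_toAddSubgroup :
    ∃ F : Set E, IsAddFundamentalDomain L.toAddSubgroup F ∧
      volume F = ENNReal.ofReal (ZLattice.covolume L) := by
  have hF := ZLattice.isAddFundamentalDomain (Free.chooseBasis ℤ L) (volume : Measure E)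
  refine ⟨_, hF, ?_⟩
  rw [ZLattice.covolume_eq_measure_fundamentalDomain L volume hF]
  exact (ofReal_measureReal (ZSpan.fundamentalDomain_isBounded _).measure_lt_top.ne).symm

lemma exists_mem_ne_zero_forall_abs_repr_lt (e : OrthonormalBasis ι ℝ E) {l : ι → ℝ}
    (hl : ∀ i, 0 ≤ l i) (hL : ZLattice.covolume L < ∏ i, l i) :
    ∃ x ∈ L, x ≠ 0 ∧ ∀ i, |e.repr x i| < l i := by
  let K : Set E := {x | ∀ i, e.repr x i ∈ Ioo (-l i) (l i)}
  have hK : Convex ℝ K := by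
    have : K = ⋂ i, (fun x ↦ e.repr x i) ⁻¹' Ioo (-l i) (l i) := by ext; simp [K]
    rw [this]
    exact convex_iInter fun i ↦ (convex_Ioo _ _).is_linear_preimage ⟨by simp, by simp⟩
  have hvol : volume K = ENNReal.ofReal (∏ i, l i) * 2 ^ finrank ℝ E := by
    rw [volume_setOf_forall_repr_mem, ENNReal.ofReal_prod_of_nonneg fun i _ ↦ hl i,
      finrank_eq_card_basis e.toBasis, ← Finset.card_univ, ← Finset.prod_const,
      ← Finset.prod_mul_distrib]
    refine Finset.prod_congr rfl fun i _ ↦ ?_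
    rw [Real.volume_Ioo, sub_neg_eq_add, ← mul_two, ENNReal.ofReal_mul (hl i)]
    simp
  obtain ⟨F, hF, hFvol⟩ := exists_isAddFundamentalDomain_toAddSubgroup L
  have : Countable L.toAddSubgroup := inferInstanceAs (Countable L)
  have hlt : volume F * 2 ^ finrank ℝ E < volume K := by
    rw [hvol, hFvol]
    exact ENNReal.mul_lt_mul_left (by simp) (by finiteness)
      ((ENNReal.ofReal_lt_ofReal_iff ((ZLattice.covolume_pos L).trans hL)).2 hL)
  have hneg : ∀ x ∈ K, -x ∈ K := fun x hx i ↦ by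
    simpa [and_comm, neg_lt] using hx i
  obtain ⟨x, hx0, hxK⟩ :=
    exists_ne_zero_mem_lattice_of_measure_mul_two_pow_lt_measure hF hneg hK hlt
  exact ⟨x, x.2, by simpa using hx0, fun i ↦ abs_lt.2 (hxK i)⟩

-- If the short lattice vectors spanned a proper subspace `W`, then Minkowski's theorem for a box
-- of half-width `ρ` in a direction orthogonal to `W` and `lam / √n` in the others would give
-- a nonzero lattice vector of length less than `lam`.
lemma span_inter_closedBall_eq_top {lam ρ : ℝ} (hlam : 0 < lam) (hρ : 0 < ρ)
    (hmin : ∀ x ∈ L, x ≠ 0 → lam ≤ ‖x‖)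
    (hL : ZLattice.covolume L < ρ * (lam / √(finrank ℝ E)) ^ (finrank ℝ E - 1)) :
    Submodule.span ℝ ((L : Set E) ∩ Metric.closedBall 0 (√(finrank ℝ E) * ρ)) = ⊤ := by
  set n := finrank ℝ E with hn
  set W := Submodule.span ℝ ((L : Set E) ∩ Metric.closedBall 0 (√n * ρ))
  by_contra hWtop
  have hn0 : 0 < n := (Nat.zero_le _).trans_lt (Submodule.finrank_lt hWtop)
  let i₀ : Fin n := ⟨0, hn0⟩
  have : Nonempty (Fin n) := ⟨i₀⟩
  obtain ⟨e, he⟩ := exists_orthonormalBasis_apply_mem_orthogonal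
    (hn.symm.trans (Fintype.card_fin n).symm) i₀ hWtop
  have hδ : 0 < lam / √n := by positivity
  obtain ⟨x, hxL, hx0, hx⟩ : ∃ x ∈ L, x ≠ 0 ∧
      ∀ i, |e.repr x i| < Function.update (fun _ ↦ lam / √n) i₀ ρ i := by
    refine exists_mem_ne_zero_forall_abs_repr_lt e (fun i ↦ ?_) ?_
    · by_cases hi : i = i₀ <;> simp [hi, hρ.le, hδ.le]
    · rw [Finset.prod_update_of_mem (Finset.mem_univ i₀), Finset.prod_const]
      simpa [Finset.card_sdiff] using hL
  have hxi (i : Fin n) (hi : i ≠ i₀) : |e.repr x i| < lam / √n := by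
    simpa [hi] using hx i
  have hxi₀ : |e.repr x i₀| < ρ := by simpa using hx i₀
  have hshort : |e.repr x i₀| < lam / √n := by
    rcases le_or_gt ρ (lam / √n) with hle | hlt
    · exact hxi₀.trans_le hle
    · have hnorm : ‖x‖ < √n * ρ := by
        simpa using norm_lt_of_forall_abs_repr_lt e fun i ↦ if hi : i = i₀ then hi ▸ hxi₀
          else (hxi i hi).trans hlt
      have hxW : x ∈ W := Submodule.subset_span ⟨hxL, by simpa using hnorm.le⟩
      rwa [e.repr_apply_apply, Submodule.inner_left_of_mem_orthogonal hxW he, abs_zero]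
  have hnorm : ‖x‖ < √n * (lam / √n) := by
    simpa using norm_lt_of_forall_abs_repr_lt e fun i ↦ if hi : i = i₀ then hi ▸ hshort
      else hxi i hi
  rw [mul_div_cancel₀ _ (by positivity)] at hnorm
  exact (hmin x hxL hx0).not_gt hnorm

end ShortVectors

section Covering

lemma exists_mem_norm_sub_le_of_span_inter_closedBall {E : Type*} [NormedAddCommGroup E]
    [NormedSpace ℝ E] [FiniteDimensional ℝ E] {L : Submodule ℤ E} {r : ℝ}
    (hspan : Submodule.span ℝ ((L : Set E) ∩ Metric.closedBall 0 r) = ⊤) (x : E) :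
    ∃ l ∈ L, ‖x - l‖ ≤ finrank ℝ E * r := by
  obtain ⟨t, ht, htspan, hind⟩ := exists_linearIndependent ℝ ((L : Set E) ∩ Metric.closedBall 0 r)
  let v : Basis t ℝ E := Basis.mk hind (by rw [Subtype.range_coe, htspan, hspan])
  have hv (i : t) : v i = i := Basis.mk_apply _ _ _
  have : Fintype t := FiniteDimensional.fintypeBasisIndex v
  have hvL : Submodule.span ℤ (range v) ≤ L := by
    rw [Submodule.span_le]
    rintro _ ⟨i, rfl⟩
    exact hv i ▸ (ht i.2).1
  refine ⟨ZSpan.floor v x, hvL (ZSpan.floor v x).2, ?_⟩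
  calc ‖x - ZSpan.floor v x‖ ≤ ∑ i, ‖v i‖ := ZSpan.norm_fract_le v x
    _ ≤ ∑ _i : t, r := Finset.sum_le_sum fun i _ ↦ by simpa [hv] using (ht i.2).2
    _ = finrank ℝ E * r := by simp [finrank_eq_card_basis v]

variable {ι : Type*} [Fintype ι] [DecidableEq ι]

lemma add_cubeFace_univ_eq_univ {A : Set (EuclideanSpace ℝ ι)} {R : ℝ} (hR : 0 < R)
    (hA : ∀ x, ∃ l ∈ A, ‖x - l‖ ≤ R) : A + cubeFace (2 * R) Finset.univ = univ := by
  refine eq_univ_of_forall fun x ↦ ?_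
  let centre : EuclideanSpace ℝ ι := WithLp.toLp 2 fun _ ↦ R
  obtain ⟨l, hl, hxl⟩ := hA (x - centre)
  refine ⟨l, hl, x - l, (mem_cubeFace (by positivity)).2 fun i ↦ ?_, add_sub_cancel l x⟩
  have hi : |x i - R - l i| ≤ R := (PiLp.norm_apply_le (p := 2) (x - centre - l) i).trans hxl
  rw [abs_le] at hi
  rw [if_pos (Finset.mem_univ i), PiLp.sub_apply]
  constructor <;> linarith

lemma abs_toReal_sub_toReal_le {p q : ℝ≥0∞} {ε : ℝ} (hp : p ≤ q + ENNReal.ofReal ε)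
    (hq : q ≤ p + ENNReal.ofReal ε) (hqtop : q ≠ ∞) (hε : 0 ≤ ε) : |p.toReal - q.toReal| ≤ ε := by
  have hptop : p ≠ ∞ := ne_top_of_le_ne_top (by finiteness) hp
  have hp' := ENNReal.toReal_le_add hp hqtop ENNReal.ofReal_ne_top
  have hq' := ENNReal.toReal_le_add hq hptop ENNReal.ofReal_ne_top
  rw [ENNReal.toReal_ofReal hε] at hp' hq'
  exact abs_sub_le_iff.2 ⟨by linarith, by linarith⟩

lemma toReal_encard {α : Type*} (s : Set α) : (s.encard : ℝ≥0∞).toReal = s.ncard := by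
  rcases s.finite_or_infinite with hs | hs
  · rw [← hs.cast_ncard_eq]
    simp
  · simp [hs.encard_eq, hs.ncard]

lemma abs_ncard_inter_mul_covolume_sub_volume_le {L : Submodule ℤ (EuclideanSpace ℝ ι)}
    [DiscreteTopology L] [IsZLattice ℝ L] {C : Set (EuclideanSpace ℝ ι)} {m a : ℝ}
    (hC : Convex ℝ C) (hm : 0 ≤ m) (hCm : ∀ x ∈ C, ∀ i, x i ∈ Ico 0 m) (ha : 0 < a)
    (hcov : (L : Set (EuclideanSpace ℝ ι)) + cubeFace a Finset.univ = univ) :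
    |((L : Set (EuclideanSpace ℝ ι)) ∩ C).ncard * ZLattice.covolume L - (volume C).toReal| ≤
      Fintype.card ι * ((m + a) ^ (Fintype.card ι - 1) * a) := by
  obtain ⟨F, hF, hFvol⟩ := exists_isAddFundamentalDomain_toAddSubgroup L
  have : Countable L.toAddSubgroup := inferInstanceAs (Countable L)
  have hcovol := ZLattice.covolume_pos L
  have hvolC : volume C ≠ ∞ := by
    have hbox : C ⊆ {x : EuclideanSpace ℝ ι | ∀ i, x i ∈ Ico 0 m} := hCm
    refine measure_ne_top_of_subset hbox ?_
    rw [volume_setOf_forall_mem]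
    simp
  have hncard : (((L : Set _) ∩ C).encard * volume F).toReal =
      ((L : Set _) ∩ C).ncard * ZLattice.covolume L := by
    rw [hFvol, ENNReal.toReal_mul, ENNReal.toReal_ofReal hcovol.le, toReal_encard]
  have hcard : ((Finset.univ : Finset ι).card : ℝ≥0∞) *
      ENNReal.ofReal ((m + a) ^ (Fintype.card ι - 1) * a) =
      ENNReal.ofReal (Fintype.card ι * ((m + a) ^ (Fintype.card ι - 1) * a)) := by
    rw [ENNReal.ofReal_mul (Nat.cast_nonneg _), ENNReal.ofReal_natCast, Finset.card_univ]
  rw [← hncard]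
  refine abs_toReal_sub_toReal_le ?_ ?_ hvolC (by positivity) <;> rw [← hcard]
  · exact (encard_inter_mul_measure_le_measure_add hF hcov
      ((hC.add (convex_cubeFace a _)).nullMeasurableSet volume)).trans
      (volume_add_cubeFace_le hC hm hCm ha Finset.univ)
  · grw [volume_le_volume_erosion_cubeFace_add hC hm hCm ha Finset.univ,
      measure_erosion_le_encard_inter_mul_measure hF hcov
        ((convex_erosion hC _).nullMeasurableSet volume)]
    rfl

end Covering

section IsotropicDiscrepancy

variable {d N : ℕ}

lemma isoDisc_le {P : Set (Euc d)} {ε : ℝ}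
    (h : ∀ C, Convex ℝ C → C ⊆ halfOpenCube d → |(P ∩ C).ncard / N - (volume C).toReal| ≤ ε) :
    isoDisc P N ≤ ε :=
  have : Nonempty {C : Set (Euc d) // Convex ℝ C ∧ C ⊆ halfOpenCube d} :=
    ⟨⟨∅, convex_empty, empty_subset _⟩⟩
  ciSup_le fun C ↦ h C C.2.1 C.2.2

lemma volume_halfOpenCube (d : ℕ) : volume (halfOpenCube d) = 1 :=
  (volume_setOf_forall_mem fun _ : Fin d ↦ Ico (0 : ℝ) 1).trans (by simp)

lemma isoDisc_ncard_le_one {P : Set (Euc d)} (hP : P.Finite) : isoDisc P P.ncard ≤ 1 := by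
  refine isoDisc_le fun C _ hC ↦ ?_
  have hcount : ((P ∩ C).ncard : ℝ) / P.ncard ≤ 1 :=
    div_le_one_of_le₀ (mod_cast ncard_le_ncard inter_subset_left hP) (Nat.cast_nonneg _)
  have hvol : (volume C).toReal ≤ 1 := by
    simpa using ENNReal.toReal_mono ENNReal.one_ne_top
      ((measure_mono hC).trans_eq (volume_halfOpenCube d))
  exact abs_sub_le_of_nonneg_of_le (by positivity) hcount ENNReal.toReal_nonneg hvol

lemma one_add_pow_pred_le_three {a : ℝ} (ha : 0 ≤ a) (hda : d * a ≤ 1) :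
    (1 + a) ^ (d - 1) ≤ 3 :=
  calc (1 + a) ^ (d - 1) ≤ (1 + a) ^ d := pow_le_pow_right₀ (by linarith) (Nat.sub_le d 1)
    _ ≤ Real.exp a ^ d := by grw [add_comm, Real.add_one_le_exp]
    _ = Real.exp (d * a) := (Real.exp_nat_mul a d).symm
    _ ≤ 3 := by grw [hda, Real.exp_one_lt_three]

variable {L : Submodule ℤ (Euc d)} [DiscreteTopology L] [IsZLattice ℝ L]

lemma isoDisc_inter_halfOpenCube_le_of_cover (hL : ZLattice.covolume L = 1 / N)
    (hcard : ((L : Set (Euc d)) ∩ halfOpenCube d).ncard = N) {a : ℝ} (ha : 0 < a)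
    (hcov : (L : Set (Euc d)) + cubeFace a Finset.univ = univ) :
    isoDisc ((L : Set (Euc d)) ∩ halfOpenCube d) N ≤ 3 * (d * a) := by
  have hN : N ≠ 0 := by
    rintro rfl
    exact (ZLattice.covolume_pos L).ne' (by simpa using hL)
  rcases le_or_gt (d * a) 1 with hsmall | hbig
  · refine isoDisc_le fun C hC hCcube ↦ ?_
    have hcount := abs_ncard_inter_mul_covolume_sub_volume_le hC zero_le_one
      (fun x hx ↦ hCcube hx) ha hcov
    rw [inter_assoc, inter_eq_right.2 hCcube]
    rw [hL, mul_one_div, Fintype.card_fin] at hcount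
    calc |((L : Set (Euc d)) ∩ C).ncard / (N : ℝ) - (volume C).toReal|
        ≤ d * ((1 + a) ^ (d - 1) * a) := hcount
      _ ≤ d * (3 * a) := by grw [one_add_pow_pred_le_three ha.le hsmall]
      _ = 3 * (d * a) := by ring
  · have hone := isoDisc_ncard_le_one (finite_of_ncard_ne_zero (hcard.trans_ne hN))
    rw [hcard] at hone
    linarith

-- `ρ = 2 * covolume / (lam / √d) ^ (d - 1)` is admissible in `span_inter_closedBall_eq_top`, so
-- the lattice translates of a cube of side `2 * d * √d * ρ` cover the space.
lemma isoDisc_inter_halfOpenCube_le (hd : d ≠ 0) (hL : ZLattice.covolume L = 1 / N)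
    (hcard : ((L : Set (Euc d)) ∩ halfOpenCube d).ncard = N) {lam : ℝ} (hlam : 0 < lam)
    (hmin : ∀ x ∈ L, x ≠ 0 → lam ≤ ‖x‖) :
    isoDisc ((L : Set (Euc d)) ∩ halfOpenCube d) N ≤
      12 * d ^ 2 * √d ^ d / (N * lam ^ (d - 1)) := by
  have hcovol := ZLattice.covolume_pos L
  have : (0 : ℝ) < d := mod_cast hd.bot_lt
  let ρ : ℝ := 2 * ZLattice.covolume L / (lam / √d) ^ (d - 1)
  have hρ : 0 < ρ := by positivity
  have hspan : Submodule.span ℝ ((L : Set (Euc d)) ∩ Metric.closedBall 0 (√d * ρ)) = ⊤ := by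
    have hlt : ZLattice.covolume L < ρ * (lam / √d) ^ (d - 1) := by
      rw [div_mul_cancel₀ _ (by positivity)]
      linarith
    simpa using span_inter_closedBall_eq_top hlam hρ hmin (by simpa using hlt)
  have hcov : (L : Set (Euc d)) + cubeFace (2 * (d * (√d * ρ))) Finset.univ = univ :=
    add_cubeFace_univ_eq_univ (by positivity) fun x ↦ by
      simpa using exists_mem_norm_sub_le_of_span_inter_closedBall hspan x
  refine (isoDisc_inter_halfOpenCube_le_of_cover hL hcard (by positivity) hcov).trans_eq ?_
  rw [← mul_pow_sub_one hd (√(d : ℝ))]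
  simp only [ρ, hL, div_pow]
  field_simp
  ring

lemma exists_isZLattice_of_isLatticeOf {Λ : Set (Euc d)} {T : Matrix (Fin d) (Fin d) ℝ}
    (hT : IsLatticeOf Λ T) : ∃ (L : Submodule ℤ (Euc d)) (_ : DiscreteTopology L)
      (_ : IsZLattice ℝ L), (L : Set (Euc d)) = Λ ∧ ZLattice.covolume L = |T.det| := by
  obtain ⟨hunit, hΛ⟩ := hT
  let e := EuclideanSpace.basisFun (Fin d) ℝ
  let column (j : Fin d) : Euc d := WithLp.toLp 2 fun i ↦ T i j
  have hdet : e.toBasis.det column = T.det := by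
    rw [Basis.det_apply]
    congr 1
  obtain ⟨hind, hspan⟩ := (Basis.is_basis_iff_det e.toBasis).2 (hdet ▸ hunit)
  let b := Basis.mk hind hspan.ge
  have hb : (b : Fin d → Euc d) = column := Basis.coe_mk _ _
  refine ⟨Submodule.span ℤ (range b), inferInstance, inferInstance, ?_, ?_⟩
  · ext x
    rw [hΛ, hb, SetLike.mem_coe, Submodule.mem_span_range_iff_exists_fun]
    refine exists_congr fun k ↦ ?_
    simp [column, PiLp.ext_iff, mul_comm, eq_comm]
  · rw [ZLattice.covolume_eq_measure_fundamentalDomain _ _ (ZSpan.isAddFundamentalDomain b volume),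
      ZSpan.measureReal_fundamentalDomain b volume e.toBasis, hb, hdet,
      measureReal_congr (ZSpan.fundamentalDomain_ae_parallelepiped e.toBasis volume),
      measureReal_def, e.coe_toBasis, e.volume_parallelepiped, ENNReal.toReal_one, mul_one]

lemma le_norm_of_le_succMin_one {Λ : Set (Euc d)} {lam : ℝ} (h : lam ≤ succMin Λ 1) {x : Euc d}
    (hx : x ∈ Λ) (hx0 : x ≠ 0) : lam ≤ ‖x‖ := by
  refine h.trans (csInf_le ⟨0, fun r hr ↦ hr.1.le⟩ ⟨norm_pos_iff.2 hx0, ?_⟩)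
  rw [Nat.one_le_iff_ne_zero, Ne, Submodule.finrank_eq_zero, Submodule.span_eq_bot]
  exact fun hall ↦ hx0 (hall x ⟨hx, by simp⟩)

end IsotropicDiscrepancy

section Constants

open Real

lemma Gamma_one_add_half_le_factorial (d : ℕ) : Gamma (1 + (d : ℝ) / 2) ≤ d.factorial := by
  match d with
  | 0 => simp
  | 1 =>
    have hpi : √π ≤ 2 := sqrt_le_iff.2 ⟨by norm_num, by linarith [pi_le_four]⟩
    rw [show (1 + ((1 : ℕ) : ℝ) / 2) = 1 / 2 + 1 by norm_num, Gamma_add_one (by norm_num),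
      Gamma_one_half_eq, Nat.factorial_one, Nat.cast_one]
    linarith
  | d + 2 =>
    rw [← Gamma_nat_eq_factorial]
    have : (0 : ℝ) ≤ d := Nat.cast_nonneg d
    refine Gamma_strictMonoOn_Ici.monotoneOn (mem_Ici.2 ?_) (mem_Ici.2 ?_) ?_ <;> push_cast <;>
      linarith

lemma three_mul_sq_le_pow (d : ℕ) : 3 * (d : ℝ) ^ 2 ≤ (7 / 2) ^ d := by
  rcases lt_or_ge d 2 with hd | hd
  · interval_cases d <;> norm_num
  · induction d, hd using Nat.le_induction with
    | base => norm_num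
    | succ n hn ih =>
      have hn' : (2 : ℝ) ≤ n := mod_cast hn
      rw [pow_succ (7 / 2 : ℝ), Nat.cast_succ]
      nlinarith

lemma pow_le_two_pow_mul_pi_rpow (d : ℕ) : (7 / 2 : ℝ) ^ d ≤ 2 ^ d * π ^ ((d : ℝ) / 2) := by
  have hpi : 7 / 4 ≤ √π := le_sqrt_of_sq_le (by linarith [pi_gt_d2])
  rw [rpow_div_two_eq_sqrt _ pi_nonneg, rpow_natCast, ← mul_pow]
  gcongr
  linarith

lemma sqrt_natCast_le (d : ℕ) : √(d : ℝ) ≤ d :=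
  sqrt_le_self_iff.2 (by norm_cast; omega)

lemma twelve_mul_sq_mul_sqrt_pow_le (d : ℕ) :
    12 * (d : ℝ) ^ 2 * √d ^ d ≤
      d ^ d * 2 ^ (d + 2) * d.factorial * π ^ ((d : ℝ) / 2) / Gamma (1 + (d : ℝ) / 2) := by
  rw [le_div_iff₀ (Gamma_pos_of_pos (by positivity))]
  calc 12 * (d : ℝ) ^ 2 * √d ^ d * Gamma (1 + (d : ℝ) / 2)
      = 4 * (3 * (d : ℝ) ^ 2) * √d ^ d * Gamma (1 + (d : ℝ) / 2) := by ring
    _ ≤ 4 * (3 * (d : ℝ) ^ 2) * d ^ d * d.factorial := by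
        grw [sqrt_natCast_le, Gamma_one_add_half_le_factorial]
    _ ≤ 4 * (2 ^ d * π ^ ((d : ℝ) / 2)) * d ^ d * d.factorial := by
        grw [three_mul_sq_le_pow, pow_le_two_pow_mul_pi_rpow]
    _ = d ^ d * 2 ^ (d + 2) * d.factorial * π ^ ((d : ℝ) / 2) := by ring

lemma rpow_neg_one_div_mul_pow_pred {x : ℝ} (hx : 0 ≤ x) {d : ℕ} (hd : d ≠ 0) :
    x ^ (-(1 : ℝ) / d) * (x ^ (-(1 : ℝ) / d)) ^ (d - 1) = x⁻¹ := by
  rw [mul_pow_sub_one hd, ← rpow_mul_natCast hx, div_mul_cancel₀ _ (Nat.cast_ne_zero.2 hd),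
    rpow_neg_one]

end Constants

theorem stmt11 {d : ℕ} (hd : 1 ≤ d) (N : ℕ) (hN : 1 ≤ N) (c₁ : ℝ) (hc : 0 < c₁)
    (Λ : Set (Euc d)) (T : Matrix (Fin d) (Fin d) ℝ) (hT : IsLatticeOf Λ T)
    (hdet : |T.det| = 1 / N)
    (hlam : succMin Λ 1 ≥ c₁ * (N : ℝ) ^ (-(1 : ℝ) / d))
    (hcard : (Λ ∩ halfOpenCube d).ncard = N) :
    isoDisc (Λ ∩ halfOpenCube d) N ≤
      ((d : ℝ) ^ d * 2 ^ (d + 2) * (d.factorial : ℝ) * Real.pi ^ ((d : ℝ) / 2) /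
          (c₁ ^ (d - 1) * Real.Gamma (1 + (d : ℝ) / 2))) *
        (N : ℝ) ^ (-(1 : ℝ) / d) := by
  obtain ⟨L, _, _, rfl, hcovol⟩ := exists_isZLattice_of_isLatticeOf hT
  have hd0 : d ≠ 0 := Nat.one_le_iff_ne_zero.1 hd
  have hN0 : (0 : ℝ) < N := mod_cast hN
  have hscale := rpow_neg_one_div_mul_pow_pred hN0.le hd0
  set t : ℝ := (N : ℝ) ^ (-(1 : ℝ) / d)
  have ht : 0 < t := Real.rpow_pos_of_pos hN0 _
  calc isoDisc ((L : Set (Euc d)) ∩ halfOpenCube d) N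
      ≤ 12 * d ^ 2 * √d ^ d / (N * (c₁ * t) ^ (d - 1)) :=
        isoDisc_inter_halfOpenCube_le hd0 (hcovol.trans hdet) hcard (mul_pos hc ht)
          fun x hx hx0 ↦ le_norm_of_le_succMin_one hlam hx hx0
    _ = 12 * d ^ 2 * √d ^ d / c₁ ^ (d - 1) * t := by
        rw [← inv_inv (N : ℝ), ← hscale, mul_pow]
        field_simp
    _ ≤ _ := by
        rw [← div_div, div_right_comm]
        grw [twelve_mul_sq_mul_sqrt_pow_le]

end
end

section
/- Let N be a prime number, let d ≥ 1, and let κ be an integer with 0 ≤ κ < N. Then the number of 'bad' parameters satisfies |{ a ∈ {1,…,N−1} : there exists a nonzero h ∈ ℤ^d with ‖h‖₁ ≤ κ and h_1 + h_2·a + ⋯ + h_d·a^{d−1} ≡ 0 (mod N) }| ≤ (d−1) · 2^d · binom(κ + d, d). -/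
open scoped RealInnerProductSpace

noncomputable section

/-!
Every integer vector `h` of `ℓ₁`-norm at most `κ` is a choice of signs times a vector of naturals
of sum at most `κ`, and a slack coordinate turns the latter into a weak composition of `κ` into
`d + 1` parts. This gives at most `2 ^ d * (κ + d).choose d` vectors. If `h ≠ 0`, some entry has
absolute value in `[1, κ]` and so survives reduction modulo `N > κ`; hence
`h₁ + h₂ X + ⋯ + h_d X ^ (d - 1)` is nonzero over the field `ZMod N` and has at most `d - 1` roots.
-/

theorem natAbs_apply_le_sum {ι : Type*} [Fintype ι] (h : ι → ℤ) (i : ι) :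
    (h i).natAbs ≤ ∑ j, (h j).natAbs :=
  Finset.single_le_sum (f := fun j => (h j).natAbs) (fun _ _ => Nat.zero_le _) (Finset.mem_univ i)

theorem exists_units_mul_natAbs_eq (z : ℤ) : ∃ ε : ℤˣ, (ε : ℤ) * z.natAbs = z := by
  rcases z.natAbs_eq with hz | hz
  · exact ⟨1, by simpa using hz.symm⟩
  · exact ⟨-1, by simpa using hz.symm⟩

section L1Ball

variable {ι : Type*} [Fintype ι] [DecidableEq ι]

variable (ι) in
/-- The integer vectors of `ℓ₁`-norm at most `κ`, cut out of the cube `[-κ, κ]^ι` so that they form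
a `Finset`. They are the candidate coefficient vectors whose roots are counted. -/
def l1Ball (κ : ℕ) : Finset (ι → ℤ) :=
  {h ∈ Fintype.piFinset fun _ => Finset.Icc (-κ : ℤ) κ | ∑ i, (h i).natAbs ≤ κ}

theorem mem_l1Ball {κ : ℕ} {h : ι → ℤ} : h ∈ l1Ball ι κ ↔ ∑ i, (h i).natAbs ≤ κ := by
  simp only [l1Ball, Finset.mem_filter, Fintype.mem_piFinset, Finset.mem_Icc,
    and_iff_right_iff_imp]
  intro hsum i
  have hi : (h i).natAbs ≤ κ := (natAbs_apply_le_sum h i).trans hsum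
  omega

theorem card_finsuppAntidiag_univ_option (κ : ℕ) :
    (Finset.finsuppAntidiag (Finset.univ : Finset (Option ι)) κ).card =
      (κ + Fintype.card ι).choose (Fintype.card ι) := by
  rw [Finset.card_finsuppAntidiag_nat_eq_multichoose, Finset.card_univ, Fintype.card_option,
    Nat.multichoose_eq, Nat.add_right_comm, Nat.add_sub_cancel, Nat.add_comm,
    Nat.choose_symm_add]

theorem l1Ball_subset_image_units_mul_antidiag (κ : ℕ) :
    l1Ball ι κ ⊆ ((Finset.univ : Finset (ι → ℤˣ)) ×ˢ
        Finset.finsuppAntidiag (Finset.univ : Finset (Option ι)) κ).image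
      fun p i => (p.1 i : ℤ) * p.2 (some i) := by
  intro h hh
  choose ε hε using fun i => exists_units_mul_natAbs_eq (h i)
  let m : Option ι →₀ ℕ := Finsupp.equivFunOnFinite.symm fun o =>
    o.elim (κ - ∑ i, (h i).natAbs) fun i => (h i).natAbs
  have hm : m ∈ Finset.finsuppAntidiag Finset.univ κ := by
    simpa [m, Finset.mem_finsuppAntidiag, Fintype.sum_option] using
      Nat.sub_add_cancel (mem_l1Ball.1 hh)
  exact Finset.mem_image.2
    ⟨(ε, m), Finset.mem_product.2 ⟨Finset.mem_univ ε, hm⟩, funext hε⟩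

theorem card_l1Ball_le (κ : ℕ) :
    (l1Ball ι κ).card ≤
      2 ^ Fintype.card ι * (κ + Fintype.card ι).choose (Fintype.card ι) := by
  refine (Finset.card_le_card (l1Ball_subset_image_units_mul_antidiag κ)).trans
    (Finset.card_image_le.trans_eq ?_)
  rw [Finset.card_product, card_finsuppAntidiag_univ_option, Finset.card_univ, Fintype.card_fun,
    Fintype.card_units_int]

end L1Ball

theorem eval_ofFn {R : Type*} [Semiring R] [DecidableEq R] {n : ℕ} (v : Fin n → R) (a : R) :
    (Polynomial.ofFn n v).eval a = ∑ i, v i * a ^ (i : ℕ) := by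
  simp only [Polynomial.ofFn_eq_sum_monomial, Polynomial.eval_finsetSum, Polynomial.eval_monomial]

theorem card_toFinset_roots_ofFn_succ_le {R : Type*} [CommRing R] [IsDomain R] [DecidableEq R]
    {n : ℕ} (v : Fin (n + 1) → R) : (Polynomial.ofFn (n + 1) v).roots.toFinset.card ≤ n :=
  calc
    (Polynomial.ofFn (n + 1) v).roots.toFinset.card
      ≤ (Polynomial.ofFn (n + 1) v).roots.card := Multiset.toFinset_card_le _
    _ ≤ (Polynomial.ofFn (n + 1) v).natDegree := Polynomial.card_roots' _
    _ ≤ n := Nat.le_of_lt_succ (Polynomial.ofFn_natDegree_lt n.succ_pos v)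

theorem intCast_comp_ne_zero_of_mem_l1Ball {R ι : Type*} [AddGroupWithOne R] [Fintype ι]
    [DecidableEq ι] {κ : ℕ} (hκ : ∀ m : ℕ, m ≠ 0 → m ≤ κ → (m : R) ≠ 0) {h : ι → ℤ}
    (hh : h ∈ l1Ball ι κ) (h0 : h ≠ 0) : (fun i => (h i : R)) ≠ 0 := by
  obtain ⟨i, hi⟩ := Function.ne_iff.1 h0
  have hcast : ((h i).natAbs : R) ≠ 0 :=
    hκ _ (Int.natAbs_ne_zero.2 hi) ((natAbs_apply_le_sum h i).trans (mem_l1Ball.1 hh))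
  refine Function.ne_iff.2 ⟨i, fun hzero => hcast ?_⟩
  rcases (h i).natAbs_eq with hz | hz <;> rw [hz] at hzero <;> simpa using hzero

theorem encard_setOf_lt_and_natCast_mem_le {R : Type*} [AddMonoidWithOne R] [IsRightCancelAdd R]
    (p : ℕ) [CharP R p] (s : Set R) :
    {a : ℕ | a < p ∧ (a : R) ∈ s}.encard ≤ s.encard :=
  Set.encard_le_encard_of_injOn (fun _ ha => ha.2)
    ((CharP.natCast_injOn_Iio R p).mono fun _ ha => ha.1)

theorem stmt16_general {R : Type*} [CommRing R] [IsDomain R] (n κ : ℕ)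
    (hκ : ∀ m : ℕ, m ≠ 0 → m ≤ κ → (m : R) ≠ 0) :
    {a : R | ∃ h : Fin (n + 1) → ℤ, h ≠ 0 ∧ ∑ i, (h i).natAbs ≤ κ ∧
        ∑ i, (h i : R) * a ^ (i : ℕ) = 0}.encard ≤
      (n * 2 ^ (n + 1) * (κ + (n + 1)).choose (n + 1) : ℕ) := by
  classical
  let rootsOf (h : Fin (n + 1) → ℤ) : Finset R :=
    (Polynomial.ofFn (n + 1) fun i => (h i : R)).roots.toFinset
  calc
    _ ≤ ((l1Ball (Fin (n + 1)) κ).biUnion rootsOf : Set R).encard := by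
      refine Set.encard_le_encard ?_
      rintro a ⟨h, h0, hsum, hroot⟩
      have hh : h ∈ l1Ball (Fin (n + 1)) κ := mem_l1Ball.2 hsum
      have hpoly : Polynomial.ofFn (n + 1) (fun i => (h i : R)) ≠ 0 :=
        (map_ne_zero_iff _ (Polynomial.injective_ofFn _)).2
          (intCast_comp_ne_zero_of_mem_l1Ball hκ hh h0)
      have ha : a ∈ rootsOf h :=
        Multiset.mem_toFinset.2 ((Polynomial.mem_roots hpoly).2 ((eval_ofFn _ a).trans hroot))
      exact Finset.mem_biUnion.2 ⟨h, hh, ha⟩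
    _ = ((l1Ball (Fin (n + 1)) κ).biUnion rootsOf).card := Set.encard_coe_eq_coe_finsetCard _
    _ ≤ ((l1Ball (Fin (n + 1)) κ).card * n : ℕ) := by
      exact_mod_cast Finset.card_biUnion_le_card_mul _ _ _ fun _ _ =>
        card_toFinset_roots_ofFn_succ_le _
    _ ≤ (n * 2 ^ (n + 1) * (κ + (n + 1)).choose (n + 1) : ℕ) := by
      rw [mul_comm, mul_assoc]
      have hball := card_l1Ball_le (ι := Fin (n + 1)) κ
      rw [Fintype.card_fin] at hball
      exact_mod_cast Nat.mul_le_mul_left n hball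

theorem stmt16 (N : ℕ) (hN : N.Prime) (d : ℕ) (hd : 1 ≤ d) (κ : ℕ) (hκ : κ < N) :
    { a : ℕ | 1 ≤ a ∧ a ≤ N - 1 ∧ ∃ h : Fin d → ℤ, h ≠ 0 ∧
        (∑ i, (h i).natAbs ≤ κ) ∧
        (N : ℤ) ∣ ∑ i, h i * (a : ℤ) ^ (i : ℕ) }.ncard ≤
      (d - 1) * 2 ^ d * Nat.choose (κ + d) d := by
  obtain ⟨n, rfl⟩ : ∃ n, d = n + 1 := Nat.exists_eq_add_of_le' hd
  have : Fact N.Prime := ⟨hN⟩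
  have hcast (m : ℕ) (hm : m ≠ 0) (hmκ : m ≤ κ) : (m : ZMod N) ≠ 0 :=
    (ZMod.natCast_eq_zero_iff m N).not.2
      (Nat.not_dvd_of_pos_of_lt (Nat.pos_of_ne_zero hm) (hmκ.trans_lt hκ))
  have hbound := (encard_setOf_lt_and_natCast_mem_le N _).trans (stmt16_general n κ hcast)
  refine (Set.encard_le_coe_iff_finite_ncard_le.1 ((Set.encard_le_encard ?_).trans hbound)).2
  rintro a ⟨-, haN, h, h0, hsum, hdvd⟩
  refine ⟨Nat.lt_of_le_pred hN.pos haN, h, h0, hsum, ?_⟩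
  exact_mod_cast (ZMod.intCast_zmod_eq_zero_iff_dvd _ N).2 hdvd

end
end

section
/- Let N be a prime number, let d ≥ 1, and let κ be an integer with 0 ≤ κ < N such that (d−1) · 2^d · binom(κ + d, d) < N − 1. Then there exists a parameter a ∈ {1,…,N−1} such that every nonzero h ∈ ℤ^d with h_1 + h_2·a + ⋯ + h_d·a^{d−1} ≡ 0 (mod N) satisfies ‖h‖₁ > κ. Consequently, for this a, the dual lattice Λ⊥ = { h ∈ ℤ^d : h·(1,a,…,a^{d−1}) ≡ 0 (mod N) } of the Korobov lattice Λ = (1/N)(1,a,…,a^{d−1})ℤ + ℤ^d satisfies λ₁(Λ⊥) ≥ κ/√d. -/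
open scoped RealInnerProductSpace

noncomputable section

/-!
A nonzero `h` of `ℓ₁`-norm at most `κ < N` stays nonzero modulo `N`, so `∑ i, h i * X ^ i` is a
nonzero polynomial of degree at most `d - 1` over the field `ZMod N`, and at most `d - 1` values of
`a` put `h` into the dual lattice. There are at most `2 ^ d * (κ + d).choose d` such `h`, because
`h` is determined by its signs and its absolute values, and the latter together with the slack
`κ - ‖h‖₁` form a composition of `κ` into `d + 1` nonnegative parts. Hence some nonzero residue `a`
is avoided by all of them. The Euclidean bound follows from `‖x‖₁ ≤ √d ‖x‖₂`.
-/

section IntegerBall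

variable {ι : Type*} [Fintype ι]

lemma natAbs_le_sum_natAbs (h : ι → ℤ) (i : ι) : (h i).natAbs ≤ ∑ j, (h j).natAbs :=
  Finset.single_le_sum_of_canonicallyOrdered (f := fun j => (h j).natAbs) (Finset.mem_univ i)

lemma intCast_zmod_ne_zero_of_sum_natAbs_lt {N : ℕ} {h : ι → ℤ} (h0 : h ≠ 0)
    (hlt : ∑ i, (h i).natAbs < N) : (fun i => (h i : ZMod N)) ≠ 0 := by
  obtain ⟨i, hi⟩ := Function.ne_iff.1 h0
  refine Function.ne_iff.2 ⟨i, fun hcast => hi ?_⟩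
  have hdvd : (N : ℤ) ∣ h i := (ZMod.intCast_zmod_eq_zero_iff_dvd _ _).1 hcast
  refine Int.eq_zero_of_abs_lt_dvd hdvd ?_
  rw [Int.abs_eq_natAbs]
  exact_mod_cast (natAbs_le_sum_natAbs h i).trans_lt hlt

/-- The absolute values of the entries of `h`, indexed by `some i`, completed by the slack
`r - ‖h‖₁` at `none` to a family with sum `r`. The subtraction truncates when `r < ‖h‖₁`. -/
def natAbsWithSlack (r : ℕ) (h : ι → ℤ) : Option ι →₀ ℕ :=
  Finsupp.equivFunOnFinite.symm fun o => o.elim (r - ∑ i, (h i).natAbs) fun i => (h i).natAbs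

lemma injective_natAbsWithSlack_prod_sign (r : ℕ) : Function.Injective
    fun h : ι → ℤ => (natAbsWithSlack r h, fun i => decide (0 ≤ h i)) := by
  intro h k hk
  obtain ⟨habs, hsign⟩ := Prod.ext_iff.1 hk
  funext i
  have habs_i : (h i).natAbs = (k i).natAbs := DFunLike.congr_fun habs (some i)
  have hsign_i : 0 ≤ h i ↔ 0 ≤ k i := decide_eq_decide.1 (congrFun hsign i)
  omega

variable [DecidableEq ι]

lemma natAbsWithSlack_mem_finsuppAntidiag {r : ℕ} {h : ι → ℤ} (hr : ∑ i, (h i).natAbs ≤ r) :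
    natAbsWithSlack r h ∈ Finset.finsuppAntidiag Finset.univ r := by
  rw [Finset.mem_finsuppAntidiag, Fintype.sum_option]
  exact ⟨Nat.sub_add_cancel hr, Finset.subset_univ _⟩

variable (ι) in
/-- The integer points of the `ℓ₁`-ball of radius `r` about the origin. They are cut out of the cube
`[-r, r]^ι`, which makes them a `Finset`. -/
def intL1Ball (r : ℕ) : Finset (ι → ℤ) :=
  {h ∈ Fintype.piFinset fun _ => Finset.Icc (-r : ℤ) r | ∑ i, (h i).natAbs ≤ r}

lemma mem_intL1Ball {r : ℕ} {h : ι → ℤ} : h ∈ intL1Ball ι r ↔ ∑ i, (h i).natAbs ≤ r := by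
  simp only [intL1Ball, Finset.mem_filter, Fintype.mem_piFinset, Finset.mem_Icc,
    and_iff_right_iff_imp]
  intro hr i
  have := natAbs_le_sum_natAbs h i
  omega

lemma card_intL1Ball_le (r : ℕ) :
    (intL1Ball ι r).card ≤
      2 ^ Fintype.card ι * (r + Fintype.card ι).choose (Fintype.card ι) := by
  calc (intL1Ball ι r).card
      ≤ (Finset.finsuppAntidiag (Finset.univ : Finset (Option ι)) r ×ˢ
          (Finset.univ : Finset (ι → Bool))).card :=
        Finset.card_le_card_of_injOn _
          (fun _ hh => Finset.mem_product.2
            ⟨natAbsWithSlack_mem_finsuppAntidiag (mem_intL1Ball.1 hh), Finset.mem_univ _⟩)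
          (injective_natAbsWithSlack_prod_sign r).injOn
    _ = (Fintype.card ι + 1 + r - 1).choose r * 2 ^ Fintype.card ι := by
        simp [Finset.card_finsuppAntidiag_nat_eq_choose]
    _ = 2 ^ Fintype.card ι * (r + Fintype.card ι).choose (Fintype.card ι) := by
        rw [mul_comm, Nat.add_right_comm, Nat.add_sub_cancel, Nat.add_comm, Nat.choose_symm_add]

end IntegerBall

section AvoidingRoots

variable {R : Type*} [CommRing R] [IsDomain R] {α : Type*}

open Polynomial in
lemma exists_mem_forall_eval_ne_zero {S : Finset α} {T : Finset R} {f : α → R[X]} {n : ℕ}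
    (hf : ∀ s ∈ S, f s ≠ 0) (hdeg : ∀ s ∈ S, (f s).natDegree ≤ n) (hcard : S.card * n < T.card) :
    ∃ a ∈ T, ∀ s ∈ S, (f s).eval a ≠ 0 := by
  classical
  have hroots : (S.biUnion fun s => (f s).roots.toFinset).card ≤ S.card * n :=
    Finset.card_biUnion_le_card_mul _ _ _ fun s hs =>
      (Multiset.toFinset_card_le _).trans ((card_roots' _).trans (hdeg s hs))
  obtain ⟨a, haT, ha⟩ := Finset.exists_mem_notMem_of_card_lt_card (hroots.trans_lt hcard)
  refine ⟨a, haT, fun s hs hroot => ha ?_⟩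
  exact Finset.mem_biUnion.2 ⟨s, hs, Multiset.mem_toFinset.2 ((mem_roots (hf s hs)).2 hroot)⟩

lemma exists_mem_forall_sum_mul_pow_ne_zero {d : ℕ} {S : Finset α} {T : Finset R}
    {v : α → Fin d → R} (hv : ∀ s ∈ S, v s ≠ 0) (hcard : S.card * (d - 1) < T.card) :
    ∃ a ∈ T, ∀ s ∈ S, ∑ i, v s i * a ^ (i : ℕ) ≠ 0 := by
  classical
  have hpoly_ne (s) (hs : s ∈ S) : Polynomial.ofFn d (v s) ≠ 0 :=
    (map_ne_zero_iff _ (Polynomial.injective_ofFn d)).2 (hv s hs)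
  have hpoly_deg (s) (_ : s ∈ S) : (Polynomial.ofFn d (v s)).natDegree ≤ d - 1 :=
    Polynomial.natDegree_le_iff_coeff_eq_zero.2 fun i hi =>
      Polynomial.ofFn_coeff_eq_zero_of_ge _ (by omega)
  simpa only [Polynomial.ofFn_eq_sum_monomial, Polynomial.eval_finsetSum,
    Polynomial.eval_monomial] using exists_mem_forall_eval_ne_zero hpoly_ne hpoly_deg hcard

end AvoidingRoots

section KorobovParameter

variable {N d κ : ℕ}

lemma exists_zmod_ne_zero_forall_sum_mul_pow_ne_zero [Fact N.Prime] (hκ : κ < N)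
    (hcount : (d - 1) * 2 ^ d * (κ + d).choose d < N - 1) :
    ∃ a : ZMod N, a ≠ 0 ∧ ∀ h ∈ intL1Ball (Fin d) κ, h ≠ 0 →
      ∑ i, (h i : ZMod N) * a ^ (i : ℕ) ≠ 0 := by
  have hcard : ((intL1Ball (Fin d) κ).erase 0).card * (d - 1)
      < (Finset.univ.erase (0 : ZMod N)).card :=
    calc ((intL1Ball (Fin d) κ).erase 0).card * (d - 1)
        ≤ (2 ^ d * (κ + d).choose d) * (d - 1) := by
          gcongr
          simpa using Finset.card_erase_le.trans (card_intL1Ball_le (ι := Fin d) κ)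
      _ = (d - 1) * 2 ^ d * (κ + d).choose d := by ring
      _ < N - 1 := hcount
      _ = (Finset.univ.erase (0 : ZMod N)).card := by
          rw [Finset.card_erase_of_mem (Finset.mem_univ _), Finset.card_univ, ZMod.card]
  obtain ⟨a, ha, hsum⟩ := exists_mem_forall_sum_mul_pow_ne_zero
    (v := fun (h : Fin d → ℤ) i => (h i : ZMod N))
    (fun h hh => intCast_zmod_ne_zero_of_sum_natAbs_lt (Finset.ne_of_mem_erase hh)
      ((mem_intL1Ball.1 (Finset.mem_of_mem_erase hh)).trans_lt hκ))
    hcard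
  exact ⟨a, Finset.ne_of_mem_erase ha, fun h hh h0 => hsum h (Finset.mem_erase.2 ⟨h0, hh⟩)⟩

lemma exists_forall_dvd_sum_mul_pow_imp_lt_sum_natAbs (hN : N.Prime) (hκ : κ < N)
    (hcount : (d - 1) * 2 ^ d * (κ + d).choose d < N - 1) :
    ∃ a : ℕ, 1 ≤ a ∧ a ≤ N - 1 ∧ ∀ h : Fin d → ℤ, h ≠ 0 →
      (N : ℤ) ∣ ∑ i, h i * (a : ℤ) ^ (i : ℕ) → κ < ∑ i, (h i).natAbs := by
  have : Fact N.Prime := ⟨hN⟩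
  obtain ⟨a, ha, hsum⟩ := exists_zmod_ne_zero_forall_sum_mul_pow_ne_zero hκ hcount
  refine ⟨a.val, ZMod.val_pos.2 ha, Nat.le_sub_one_of_lt a.val_lt, fun h h0 hdvd => ?_⟩
  by_contra! hle
  apply hsum h (mem_intL1Ball.2 hle) h0
  simpa using (ZMod.intCast_zmod_eq_zero_iff_dvd _ N).2 hdvd

end KorobovParameter

section EuclideanLength

variable {ι : Type*} [Fintype ι]

lemma sum_norm_le_sqrt_card_mul_norm {β : ι → Type*} [∀ i, SeminormedAddCommGroup (β i)]
    (x : PiLp 2 β) : ∑ i, ‖x i‖ ≤ √(Fintype.card ι) * ‖x‖ := by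
  rw [PiLp.norm_eq_of_L2, ← Real.sqrt_mul (Nat.cast_nonneg _)]
  exact Real.le_sqrt_of_sq_le sq_sum_le_card_mul_sum_sq

lemma sum_natAbs_div_sqrt_card_le_norm {y : EuclideanSpace ℝ ι} {h : ι → ℤ}
    (hy : ∀ i, y i = h i) : ((∑ i, (h i).natAbs : ℕ) : ℝ) / √(Fintype.card ι) ≤ ‖y‖ := by
  have hsum : ((∑ i, (h i).natAbs : ℕ) : ℝ) = ∑ i, ‖y i‖ := by
    simp [hy, Nat.cast_natAbs]
  rw [hsum]
  exact div_le_of_le_mul₀ (Real.sqrt_nonneg _) (norm_nonneg _)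
    ((sum_norm_le_sqrt_card_mul_norm y).trans_eq (mul_comm _ _))

end EuclideanLength

section FirstMinimum

variable {d : ℕ}

lemma one_le_finrank_span_iff_exists_ne_zero {K V : Type*} [DivisionRing K] [AddCommGroup V]
    [Module K V] [FiniteDimensional K V] {s : Set V} :
    1 ≤ Module.finrank K (Submodule.span K s) ↔ ∃ y ∈ s, y ≠ 0 := by
  simp [Nat.one_le_iff_ne_zero, Submodule.finrank_eq_zero, Submodule.span_eq_bot]

lemma le_succMin_one_s17 {Λ : Set (Euc d)} {c : ℝ} (hne : ∃ y ∈ Λ, y ≠ 0)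
    (hc : ∀ y ∈ Λ, y ≠ 0 → c ≤ ‖y‖) : c ≤ succMin Λ 1 := by
  simp only [succMin, one_le_finrank_span_iff_exists_ne_zero]
  obtain ⟨z, hz, hz0⟩ := hne
  refine le_csInf ⟨‖z‖, norm_pos_iff.2 hz0, z, ⟨hz, by simp⟩, hz0⟩ ?_
  rintro r ⟨-, y, ⟨hyΛ, hyr⟩, hy0⟩
  exact (hc y hyΛ hy0).trans (mem_closedBall_zero_iff.1 hyr)

/-- The dual lattice `{h ∈ ℤ^d | h · (1, a, …, a^(d-1)) ≡ 0 (mod N)}` of the Korobov lattice with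
modulus `N` and parameter `a`, as a subset of `ℝ^d`. -/
def korobovDual (N d a : ℕ) : Set (Euc d) :=
  { y | ∃ h : Fin d → ℤ, (∀ i, y i = (h i : ℝ)) ∧ (N : ℤ) ∣ ∑ i, h i * (a : ℤ) ^ (i : ℕ) }

lemma single_mem_korobovDual (N a : ℕ) (i : Fin d) :
    EuclideanSpace.single i (N : ℝ) ∈ korobovDual N d a := by
  refine ⟨Pi.single i N, fun j => ?_, Finset.dvd_sum fun j _ => dvd_mul_of_dvd_left ?_ _⟩ <;>
    obtain rfl | hij := eq_or_ne j i <;> simp [*]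

lemma div_sqrt_le_succMin_korobovDual {N a κ : ℕ} (hN : N ≠ 0) (hd : 1 ≤ d)
    (hlt : ∀ h : Fin d → ℤ, h ≠ 0 → (N : ℤ) ∣ ∑ i, h i * (a : ℤ) ^ (i : ℕ) →
      κ < ∑ i, (h i).natAbs) :
    (κ : ℝ) / √d ≤ succMin (korobovDual N d a) 1 := by
  refine le_succMin_one_s17 ⟨_, single_mem_korobovDual N a ⟨0, hd⟩, by simpa using hN⟩ ?_
  rintro y ⟨h, hy, hdvd⟩ hy0
  have h0 : h ≠ 0 := by
    rintro rfl
    exact hy0 (PiLp.ext fun i => by simp [hy i])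
  calc (κ : ℝ) / √d ≤ ((∑ i, (h i).natAbs : ℕ) : ℝ) / √d := by
        gcongr
        exact (hlt h h0 hdvd).le
    _ ≤ ‖y‖ := by simpa only [Fintype.card_fin] using sum_natAbs_div_sqrt_card_le_norm hy

end FirstMinimum

theorem stmt17 (N : ℕ) (hN : N.Prime) (d : ℕ) (hd : 1 ≤ d) (κ : ℕ) (hκ : κ < N)
    (hcount : (d - 1) * 2 ^ d * Nat.choose (κ + d) d < N - 1) :
    ∃ a : ℕ, 1 ≤ a ∧ a ≤ N - 1 ∧
      (∀ h : Fin d → ℤ, h ≠ 0 → ((N : ℤ) ∣ ∑ i, h i * (a : ℤ) ^ (i : ℕ)) →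
        κ < ∑ i, (h i).natAbs) ∧
      succMin { y : Euc d | ∃ h : Fin d → ℤ, (∀ i, y i = (h i : ℝ)) ∧
          (N : ℤ) ∣ ∑ i, h i * (a : ℤ) ^ (i : ℕ) } 1 ≥ (κ : ℝ) / Real.sqrt d := by
  obtain ⟨a, ha_pos, ha_le, hlt⟩ :=
    exists_forall_dvd_sum_mul_pow_imp_lt_sum_natAbs hN hκ hcount
  exact ⟨a, ha_pos, ha_le, hlt, div_sqrt_le_succMin_korobovDual hN.ne_zero hd hlt⟩

end
end
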